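/- arXiv:1607.05772 — 6 statements merged into one kernel-verified Lean document; each statement's English description precedes it below -/
import Mathlib

section
/- Let K be an algebraically closed field of characteristic 0, let q ∈ {4, 5, 7}, and let G ⊆ PGL₃(K) be a subgroup isomorphic to the cyclic group ℤ/qℤ. Then there exist φ ∈ PGL₃(K) and a primitive q-th root of unity ζ ∈ K such that: if q = 4, then φ⁻¹Gφ is generated by [diag(1,ζ,1)] or by [diag(1,ζ,−1)]; if q = 5, then φ⁻¹Gφ is generated by [diag(1,ζ,1)] or by [diag(1,ζ,ζ³)]; if q = 7, then φ⁻¹Gφ is generated by [diag(1,ζ,1)], by [diag(1,ζ,ζ²)], or by [diag(1,ζ,ζ³)]. -/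
open Matrix MvPolynomial
open scoped Classical

noncomputable section

/-- `PGL₃(K)`: the quotient of `GL₃(K)` by its center (the nonzero scalar matrices). -/
abbrev PGL3 (K : Type*) [Field K] : Type _ :=
  GL (Fin 3) K ⧸ Subgroup.center (GL (Fin 3) K)

/-- The class in `PGL₃(K)` of a matrix (sent to `1` if the matrix is not invertible). -/
def toPGL3 {K : Type*} [Field K] (M : Matrix (Fin 3) (Fin 3) K) : PGL3 K :=
  if h : M.det ≠ 0 then
    QuotientGroup.mk (Matrix.GeneralLinearGroup.mkOfDetNeZero M h) else 1

/-- The automorphism group (as a set of classes in `PGL₃(K)`) of a polynomial self-map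
`F` of `K³`: the classes `[M]` such that `F(M·v) = c·M·F(v)` for some `c ≠ 0` and all `v`. -/
def AutQ {K : Type*} [Field K] (F : (Fin 3 → K) → (Fin 3 → K)) : Set (PGL3 K) :=
  {φ | ∃ M : GL (Fin 3) K, (QuotientGroup.mk M : PGL3 K) = φ ∧
    ∃ c : K, c ≠ 0 ∧ ∀ v : Fin 3 → K,
      F ((M : Matrix (Fin 3) (Fin 3) K) *ᵥ v) = c • ((M : Matrix (Fin 3) (Fin 3) K) *ᵥ F v)}

/-- Two polynomial self-maps of `K³` are `PGL₃(K)`-conjugate. -/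
def PGLConj {K : Type*} [Field K] (F F' : (Fin 3 → K) → (Fin 3 → K)) : Prop :=
  ∃ (M : Matrix (Fin 3) (Fin 3) K) (c : K), M.det ≠ 0 ∧ c ≠ 0 ∧
    ∀ v : Fin 3 → K, F (M *ᵥ v) = c • (M *ᵥ F' v)

/-- The `n`-fold composite of the polynomial self-map of `K³` whose coordinates are the
polynomials `P 0, P 1, P 2`, as a triple of polynomials (the `0`-th iterate is the identity). -/
def iterComp {K : Type*} [CommSemiring K] (P : Fin 3 → MvPolynomial (Fin 3) K) :
    ℕ → Fin 3 → MvPolynomial (Fin 3) K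
  | 0 => fun i => MvPolynomial.X i
  | n + 1 => fun i => MvPolynomial.aeval (iterComp P n) (P i)

/-- The lists of exponents occurring in the normal forms. -/
def tgts (q : ℕ) : List (Fin 3 → ℕ) :=
  if q = 4 then [![0,1,0], ![0,1,2]] else if q = 5 then [![0,1,0], ![0,1,3]]
    else [![0,1,0], ![0,1,2], ![0,1,3]]

/-- The combinatorial normal form statement on exponents. -/
def Comb (q : ℕ) : Prop :=
  ∀ a b : Fin q, (∀ k : Fin q, 0 < k.val → ¬ (k.val * a.val % q = 0 ∧ k.val * b.val % q = 0)) →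
  ∃ σ : Equiv.Perm (Fin 3), ∃ k t : Fin q, Nat.Coprime k.val q ∧ ∃ T ∈ tgts q,
    ∀ i, k.val * (![0, a.val, b.val] : Fin 3 → ℕ) (σ i) % q = (t.val + T i) % q

theorem comb4 : Comb 4 := by unfold Comb; decide +kernel
theorem comb5 : Comb 5 := by unfold Comb; decide +kernel
theorem comb7 : Comb 7 := by unfold Comb; decide +kernel

theorem diagz {K : Type*} [Field K] [IsAlgClosed K] [CharZero K] (q : ℕ) (hq : q ≠ 0)
    (M : Matrix (Fin 3) (Fin 3) K) (c : K) (hc : c ≠ 0) (h : M ^ q = Matrix.scalar (Fin 3) c) :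
    ∃ (b : Fin 3 → (Fin 3 → K)) (d : Fin 3 → K), LinearIndependent K b ∧
      ∀ i, M *ᵥ b i = d i • b i := by
  set f : Module.End K (Fin 3 → K) := Matrix.toLinAlgEquiv' M with hf
  have hs : f.IsSemisimple := by
    apply Module.End.isSemisimple_of_squarefree_aeval_eq_zero (p := Polynomial.X ^ q - Polynomial.C c)
    · exact (Polynomial.separable_X_pow_sub_C c (by exact_mod_cast hq) hc).squarefree
    · have : f ^ q = algebraMap K _ c := by
        rw [hf, ← map_pow, h]
        exact (Matrix.toLinAlgEquiv' (R := K) (n := Fin 3)).commutes c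
      simp [this]
  have htop := Module.End.iSup_maxGenEigenspace_eq_top f
  simp_rw [hs.isFinitelySemisimple.maxGenEigenspace_eq_eigenspace] at htop
  let s : Set (Fin 3 → K) := {v | ∃ μ : K, M *ᵥ v = μ • v}
  have hspan : ⊤ ≤ Submodule.span K s := by
    rw [← htop]
    refine iSup_le fun μ v hv => Submodule.subset_span ⟨μ, ?_⟩
    have := Module.End.mem_eigenspace_iff.1 hv
    simpa [hf] using this
  let B := Module.Basis.ofSpan hspan
  let B' := B.reindex (B.indexEquiv (Pi.basisFun K (Fin 3)))
  have hB : ∀ i, ∃ μ : K, M *ᵥ B' i = μ • B' i := fun i =>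
    Module.Basis.ofSpan_subset hspan (by simp [B', B])
  choose d hd using hB
  exact ⟨B', d, B'.linearIndependent, hd⟩

theorem pgl_conj_pow {K : Type*} [Field K] (M : GL (Fin 3) K)
    (b : Fin 3 → (Fin 3 → K)) (hb : LinearIndependent K b) :
    ∃ φ : PGL3 K, ∀ (d : Fin 3 → K), (∀ i, M.val *ᵥ b i = d i • b i) →
      ∀ (e : Fin 3 → K) (s : K) (k : ℕ), (∀ i, e i ≠ 0) → s ≠ 0 → (∀ i, d i ^ k = s * e i) →
      φ⁻¹ * (QuotientGroup.mk M : PGL3 K) ^ k * φ = toPGL3 (Matrix.diagonal e) := by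
  have hP : IsUnit (Matrix.of b)ᵀ := Matrix.linearIndependent_cols_iff_isUnit.1 hb
  obtain ⟨P, hP⟩ := hP
  refine ⟨QuotientGroup.mk P, ?_⟩
  intro d hd e s k he hs hk
  have hdet : (Matrix.diagonal e).det ≠ 0 := by
    rw [Matrix.det_diagonal]; exact Finset.prod_ne_zero_iff.2 fun i _ => he i
  rw [toPGL3, dif_pos hdet, mul_assoc, inv_mul_eq_iff_eq_mul, ← QuotientGroup.mk_pow,
    ← QuotientGroup.mk_mul, ← QuotientGroup.mk_mul, eq_comm, QuotientGroup.eq,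
    Matrix.GeneralLinearGroup.mem_center_iff_val_mem_range_scalar]
  refine ⟨s, ?_⟩
  have h1 : M.val * P.val = P.val * Matrix.diagonal d := by
    rw [hP]
    ext i j
    have := congrFun (hd j) i
    rw [Matrix.mul_diagonal]
    simp [Matrix.mul_apply, Matrix.mulVec, dotProduct] at this ⊢
    rw [this, mul_comm]
  have h2 : M.val ^ k * P.val = P.val * Matrix.diagonal d ^ k := by
    have : SemiconjBy P.val (Matrix.diagonal d) M.val := h1.symm
    exact (this.pow_right k).symm
  have h3 : Matrix.diagonal d ^ k = Matrix.diagonal e * Matrix.scalar (Fin 3) s := by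
    rw [Matrix.diagonal_pow, Matrix.scalar_apply, Matrix.diagonal_mul_diagonal]
    congr 1; ext i; simp [hk i, mul_comm]
  set Q := P * Matrix.GeneralLinearGroup.mkOfDetNeZero (Matrix.diagonal e) hdet with hQ
  have h4 : (M ^ k * P).val = Q.val * Matrix.scalar (Fin 3) s := by
    rw [hQ, Units.val_mul, Units.val_mul, Units.val_pow_eq_pow_val, h2, h3, ← mul_assoc]
    rfl
  rw [Units.val_mul, h4, ← mul_assoc, Units.inv_mul, one_mul]
  
theorem scal_of_eig {K : Type*} [Field K] (M : GL (Fin 3) K)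
    (b : Fin 3 → (Fin 3 → K)) (hb : LinearIndependent K b) (d : Fin 3 → K)
    (hd : ∀ i, M.val *ᵥ b i = d i • b i) (k : ℕ) (s : K) (hs : s ≠ 0) (hk : ∀ i, d i ^ k = s) :
    (QuotientGroup.mk M : PGL3 K) ^ k = 1 := by
  obtain ⟨φ, hφ⟩ := pgl_conj_pow M b hb
  have := hφ d hd (fun _ => 1) s k (by simp) hs (by simpa using hk)
  have h1 : toPGL3 (Matrix.diagonal fun _ : Fin 3 => (1 : K)) = 1 := by
    have h : (Matrix.diagonal fun _ : Fin 3 => (1 : K)).det ≠ 0 := by simp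
    rw [toPGL3, dif_pos h]
    have : Matrix.GeneralLinearGroup.mkOfDetNeZero (Matrix.diagonal fun _ : Fin 3 => (1 : K)) h = 1 := by
      ext : 1
      exact Matrix.diagonal_one
    rw [this]; rfl
  rw [h1] at this
  have h5 := congrArg (fun x => φ * x * φ⁻¹) this
  simpa [mul_assoc] using h5

theorem closure_pow_eq {G : Type*} [Group G] (x : G) (k q : ℕ) (hx : x ^ q = 1)
    (hk : Nat.Coprime k q) : Subgroup.closure {x} = Subgroup.closure {x ^ k} := by
  rw [← Subgroup.zpowers_eq_closure, ← Subgroup.zpowers_eq_closure]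
  apply le_antisymm
  · rw [Subgroup.zpowers_le]
    refine ⟨Nat.gcdA k q, ?_⟩
    have := Nat.gcd_eq_gcd_ab k q
    rw [hk.gcd_eq_one] at this
    show (x ^ k) ^ (Nat.gcdA k q) = x
    rw [← zpow_natCast x k, ← _root_.zpow_mul]
    have h2 : (k : ℤ) * Nat.gcdA k q = 1 - q * Nat.gcdB k q := by push_cast at this; linarith
    rw [h2, _root_.zpow_sub, _root_.zpow_mul, zpow_natCast, hx]; simp
  · rw [Subgroup.zpowers_le]
    exact Subgroup.npow_mem_zpowers x k

theorem core {K : Type*} [Field K] [IsAlgClosed K] [CharZero K]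
    (q : ℕ) (hq : 1 < q) (hcomb : Comb q)
    (G : Subgroup (PGL3 K)) (hG : Nonempty (G ≃* Multiplicative (ZMod q)))
    (ζ : K) (hζ : IsPrimitiveRoot ζ q) :
    ∃ φ : PGL3 K, ∃ T ∈ tgts q, Subgroup.map (MulAut.conj φ⁻¹).toMonoidHom G =
            Subgroup.closure {toPGL3 (Matrix.diagonal fun i => ζ ^ T i)} := by
  have : NeZero q := ⟨by omega⟩
  have hcyc : IsCyclic G := by
    obtain ⟨e⟩ := hG
    exact isCyclic_of_surjective e.symm e.symm.surjective
  have hcard : Nat.card G = q := by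
    obtain ⟨e⟩ := hG
    rw [Nat.card_congr e.toEquiv, Nat.card_congr Multiplicative.toAdd, Nat.card_zmod]
  obtain ⟨g, hg⟩ := hcyc.exists_generator
  have hord : orderOf (g : PGL3 K) = q := by
    rw [Subgroup.orderOf_coe, orderOf_eq_card_of_forall_mem_zpowers hg, hcard]
  have hGcl : G = Subgroup.closure {(g : PGL3 K)} := by
    rw [← Subgroup.zpowers_eq_closure]
    apply le_antisymm
    · intro x hx
      obtain ⟨n, hn⟩ := hg ⟨x, hx⟩
      exact ⟨n, by simpa using congrArg Subtype.val hn⟩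
    · rw [Subgroup.zpowers_le]; exact g.2
  generalize (g : PGL3 K) = y at hord hGcl
  obtain ⟨M, rfl⟩ := QuotientGroup.mk_surjective y
  have hyq : (QuotientGroup.mk M : PGL3 K) ^ q = 1 := by
    rw [← hord]; exact pow_orderOf_eq_one _
  have hcen : M ^ q ∈ Subgroup.center (GL (Fin 3) K) := by
    rw [← QuotientGroup.eq_one_iff, QuotientGroup.mk_pow]; exact hyq
  obtain ⟨c, hc⟩ := Matrix.GeneralLinearGroup.mem_center_iff_val_mem_range_scalar.1 hcen
  have hc0 : c ≠ 0 := by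
    rintro rfl
    have : IsUnit (M ^ q).val := (M ^ q).isUnit
    rw [← hc] at this
    simp at this
  obtain ⟨b, d, hb, hd⟩ := diagz q (by omega) M.val c hc0 (by rw [hc]; simp)
  have hdq : ∀ i, d i ^ q = c := by
    intro i
    have h1 : ∀ n : ℕ, (M.val ^ n) *ᵥ b i = d i ^ n • b i := by
      intro n
      induction n with
      | zero => simp
      | succ n ih => rw [pow_succ, ← Matrix.mulVec_mulVec, hd, Matrix.mulVec_smul, ih, smul_smul,
          pow_succ, mul_comm]
    have h2 := h1 q
    rw [← Units.val_pow_eq_pow_val, ← hc] at h2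
    have h3 : (Matrix.scalar (Fin 3) c) *ᵥ b i = c • b i := by
      ext j; simp [Matrix.mulVec_diagonal]
    rw [h3] at h2
    exact (smul_left_injective K (hb.ne_zero i) h2).symm
  have hd0 : ∀ i, d i ≠ 0 := by
    intro i h
    have := hdq i
    rw [h, zero_pow (by omega)] at this
    exact hc0 this.symm
  have hroot : ∀ i, ∃ a < q, ζ ^ a = d i / d 0 := fun i =>
    hζ.eq_pow_of_pow_eq_one (by rw [div_pow, hdq, hdq, div_self hc0])
  obtain ⟨a1, ha1, h1⟩ := hroot 1
  obtain ⟨a2, ha2, h2⟩ := hroot 2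
  have hde : ∀ i, d i = d 0 * ζ ^ (![0, a1, a2] : Fin 3 → ℕ) i := by
    intro i
    have := hd0 0
    fin_cases i
    · simp
    · simp [h1]; field_simp
    · simp [h2]; field_simp
  have hmod : ∀ m n : ℕ, m % q = n % q → ζ ^ m = ζ ^ n := by
    intro m n h
    rw [← Nat.mod_add_div m q, ← Nat.mod_add_div n q, h]
    simp [pow_add, pow_mul, hζ.pow_eq_one]
  obtain ⟨σ, k, t, hkq, T, hT, hkT⟩ := hcomb ⟨a1, ha1⟩ ⟨a2, ha2⟩ (by
    rintro ⟨k, hk⟩ hk0 ⟨e1, e2⟩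
    have hlt : (QuotientGroup.mk M : PGL3 K) ^ k ≠ 1 :=
      pow_ne_one_of_lt_orderOf (by simp at hk0; omega) (by rw [hord]; exact hk)
    apply hlt
    refine scal_of_eig M b hb d hd k (d 0 ^ k) (pow_ne_zero _ (hd0 0)) fun i => ?_
    rw [hde i, mul_pow, ← pow_mul]
    have : ζ ^ ((![0, a1, a2] : Fin 3 → ℕ) i * k) = ζ ^ 0 := by
      apply hmod
      rw [mul_comm]
      fin_cases i
      · simp
      · simpa using e1
      · simpa using e2
    rw [this]; simp)
  obtain ⟨φ, hφ⟩ := pgl_conj_pow M (b ∘ σ) (hb.comp σ σ.injective)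
  refine ⟨φ, T, hT, ?_⟩
  have hz0 : ζ ≠ 0 := hζ.ne_zero (by omega)
  have key := hφ (d ∘ σ) (fun i => hd (σ i)) (fun i => ζ ^ T i) (d 0 ^ k.val * ζ ^ t.val) k.val
    (fun i => pow_ne_zero _ hz0) (mul_ne_zero (pow_ne_zero _ (hd0 0)) (pow_ne_zero _ hz0))
    (fun i => by
      show d (σ i) ^ k.val = _
      rw [hde (σ i), mul_pow, ← pow_mul, mul_assoc, ← pow_add, mul_comm _ k.val]
      congr 1
      exact hmod _ _ (hkT i))
  rw [← key, hGcl, closure_pow_eq _ k.val q hyq hkq, MonoidHom.map_closure]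
  simp

theorem stmt1 {K : Type*} [Field K] [IsAlgClosed K] [CharZero K]
    (q : ℕ) (hq : q = 4 ∨ q = 5 ∨ q = 7)
    (G : Subgroup (PGL3 K)) (hG : Nonempty (G ≃* Multiplicative (ZMod q))) :
    ∃ (φ : PGL3 K) (ζ : K),
      IsPrimitiveRoot ζ q ∧
      (q = 4 →
        Subgroup.map (MulAut.conj φ⁻¹).toMonoidHom G =
            Subgroup.closure {toPGL3 (Matrix.diagonal ![1, ζ, 1])} ∨
          Subgroup.map (MulAut.conj φ⁻¹).toMonoidHom G =
            Subgroup.closure {toPGL3 (Matrix.diagonal ![1, ζ, -1])}) ∧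
      (q = 5 →
        Subgroup.map (MulAut.conj φ⁻¹).toMonoidHom G =
            Subgroup.closure {toPGL3 (Matrix.diagonal ![1, ζ, 1])} ∨
          Subgroup.map (MulAut.conj φ⁻¹).toMonoidHom G =
            Subgroup.closure {toPGL3 (Matrix.diagonal ![1, ζ, ζ ^ 3])}) ∧
      (q = 7 →
        Subgroup.map (MulAut.conj φ⁻¹).toMonoidHom G =
            Subgroup.closure {toPGL3 (Matrix.diagonal ![1, ζ, 1])} ∨
          Subgroup.map (MulAut.conj φ⁻¹).toMonoidHom G =
            Subgroup.closure {toPGL3 (Matrix.diagonal ![1, ζ, ζ ^ 2])} ∨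
          Subgroup.map (MulAut.conj φ⁻¹).toMonoidHom G =
            Subgroup.closure {toPGL3 (Matrix.diagonal ![1, ζ, ζ ^ 3])}) := by
  have : NeZero q := ⟨by omega⟩
  have : NeZero (q : K) := ⟨by exact_mod_cast NeZero.ne q⟩
  obtain ⟨ζ, hζ⟩ := HasEnoughRootsOfUnity.exists_primitiveRoot K q
  have hcomb : Comb q := by
    rcases hq with rfl | rfl | rfl
    exacts [comb4, comb5, comb7]
  obtain ⟨φ, T, hT, h⟩ := core q (by omega) hcomb G hG ζ hζ
  have hv : ∀ x y z : ℕ, (fun i => ζ ^ (![x, y, z] : Fin 3 → ℕ) i) = ![ζ ^ x, ζ ^ y, ζ ^ z] := by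
    intro x y z
    ext i; fin_cases i <;> rfl
  refine ⟨φ, ζ, hζ, ?_, ?_, ?_⟩
  · rintro rfl
    have h2 : ζ ^ 2 = -1 := by
      have := (hζ.pow (b := 2) (a := 2) (by norm_num) (by norm_num)).eq_neg_one_of_two_right
      exact this
    simp only [tgts, if_true, List.mem_cons, List.not_mem_nil, or_false] at hT
    rcases hT with rfl | rfl <;> rw [hv] at h <;> simp only [pow_zero, pow_one, h2] at h
    · exact Or.inl h
    · exact Or.inr h
  · rintro rfl
    simp [tgts] at hT
    rcases hT with rfl | rfl <;> rw [hv] at h <;> simp only [pow_zero, pow_one] at h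
    · exact Or.inl h
    · exact Or.inr h
  · rintro rfl
    simp [tgts] at hT
    rcases hT with rfl | rfl | rfl <;> rw [hv] at h <;> simp only [pow_zero, pow_one] at h
    · exact Or.inl h
    · exact Or.inr (Or.inl h)
    · exact Or.inr (Or.inr h)
end
end

section
/- Let K be an algebraically closed field of characteristic 0, let ζ ∈ K be a primitive 7th root of unity, and let F : K³ → K³ be the polynomial map F(X,Y,Z) = (Z², X², Y²). Then Aut(F) is exactly the subgroup of PGL₃(K) generated by the class [diag(1, ζ, ζ³)] and the class of the permutation matrix with rows (0,1,0), (0,0,1), (1,0,0); this subgroup has order 21 and is isomorphic to the semidirect product C₇ ⋊ C₃ of a cyclic group of order 7 by a cyclic group of order 3 acting nontrivially. -/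
open Matrix MvPolynomial
open scoped Classical

noncomputable section

/-- The homomorphism from `ZMod n` determined by an element killed by `n`. -/
def zpowHom7 {G : Type*} [Group G] (n : ℕ) [NeZero n] (g : G) (h : g ^ n = 1) :
    Multiplicative (ZMod n) →* G where
  toFun x := g ^ (Multiplicative.toAdd x).val
  map_one' := by simp
  map_mul' x y := by
    rw [toAdd_mul, ZMod.val_add, ← pow_add]
    exact (pow_eq_pow_mod _ h).symm

theorem zpowHom7_apply {G : Type*} [Group G] (n : ℕ) [NeZero n] (g : G) (h : g ^ n = 1)
    (x : Multiplicative (ZMod n)) : zpowHom7 n g h x = g ^ (Multiplicative.toAdd x).val := rfl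

theorem zpowHom7_ofNat {G : Type*} [Group G] (n : ℕ) [NeZero n] (g : G) (h : g ^ n = 1)
    (k : ℕ) : zpowHom7 n g h (Multiplicative.ofAdd (k : ZMod n)) = g ^ k := by
  rw [zpowHom7_apply, toAdd_ofAdd, ZMod.val_natCast]
  exact (pow_eq_pow_mod _ h).symm

theorem mul7_pow (x : Multiplicative (ZMod 7)) : x ^ 7 = 1 := by
  have : Multiplicative.toAdd (x ^ 7) = 0 := by
    rw [toAdd_pow]
    simpa using (ZModModule.char_nsmul_eq_zero 7 (Multiplicative.toAdd x))
  exact this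

/-- Squaring on the cyclic group of order 7. -/
def sqAut : MulAut (Multiplicative (ZMod 7)) where
  toFun x := x ^ 2
  invFun x := x ^ 4
  left_inv x := by
    change (x ^ 2) ^ 4 = x
    rw [← pow_mul, show 2 * 4 = 7 + 1 from rfl, pow_succ, mul7_pow, one_mul]
  right_inv x := by
    change (x ^ 4) ^ 2 = x
    rw [← pow_mul, show 4 * 2 = 7 + 1 from rfl, pow_succ, mul7_pow, one_mul]
  map_mul' x y := mul_pow x y 2

theorem sqAut_apply (x : Multiplicative (ZMod 7)) : sqAut x = x ^ 2 := rfl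

theorem sqAut_pow : sqAut ^ 3 = 1 := by
  ext1 x
  change ((x ^ 2) ^ 2) ^ 2 = x
  rw [← pow_mul, ← pow_mul, show 2 * 2 * 2 = 7 + 1 from rfl, pow_succ, mul7_pow, one_mul]

theorem sqAut_ne : sqAut ≠ 1 := by
  intro h
  have h1 := DFunLike.congr_fun h (Multiplicative.ofAdd (1 : ZMod 7))
  rw [sqAut_apply, MulAut.one_apply, ← ofAdd_nsmul] at h1
  have h2 : (2 • (1 : ZMod 7)) = 1 := Multiplicative.ofAdd.injective h1
  revert h2
  decide

section
variable {K : Type*} [Field K]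

theorem mk_eq_of_smul (M N : GL (Fin 3) K) (t : K) (ht : t ≠ 0)
    (h : N.val = t • M.val) : (QuotientGroup.mk M : PGL3 K) = QuotientGroup.mk N := by
  rw [QuotientGroup.eq, Matrix.GeneralLinearGroup.mem_center_iff_val_mem_range_scalar]
  refine ⟨t, ?_⟩
  rw [Units.val_mul, h, Matrix.mul_smul, Units.inv_mul, Matrix.scalar_apply,
    Matrix.smul_one_eq_diagonal]

/-- The lift of the diagonal generator. -/
def gD (ζ : K) (h : ζ ≠ 0) : GL (Fin 3) K :=
  Matrix.GeneralLinearGroup.mkOfDetNeZero (Matrix.diagonal ![ζ, ζ ^ 2, ζ ^ 4])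
    (by rw [Matrix.det_diagonal, Fin.prod_univ_three]; simp [h])

theorem detP : (!![0,1,0; 0,0,1; 1,0,0] : Matrix (Fin 3) (Fin 3) K).det ≠ 0 := by
  rw [Matrix.det_fin_three]; simp

/-- The permutation generator. -/
def gP (K : Type*) [Field K] : GL (Fin 3) K :=
  Matrix.GeneralLinearGroup.mkOfDetNeZero !![0,1,0; 0,0,1; 1,0,0] detP

theorem gD_pow (ζ : K) (h : ζ ≠ 0) (i : ℕ) :
    ((gD ζ h ^ i : GL (Fin 3) K) : Matrix (Fin 3) (Fin 3) K)
      = Matrix.diagonal ![ζ ^ i, (ζ ^ i) ^ 2, (ζ ^ i) ^ 4] := by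
  rw [Units.val_pow_eq_pow_val]
  change (Matrix.diagonal ![ζ, ζ ^ 2, ζ ^ 4]) ^ i = _
  rw [Matrix.diagonal_pow]
  congr 1
  funext j
  fin_cases j
  · rfl
  · change (ζ ^ 2) ^ i = (ζ ^ i) ^ 2
    ring
  · change (ζ ^ 4) ^ i = (ζ ^ i) ^ 4
    ring

theorem gD_seven (ζ : K) (h : ζ ≠ 0) (h7 : ζ ^ 7 = 1) : gD ζ h ^ 7 = 1 := by
  apply Units.ext
  rw [gD_pow, h7]
  ext i j
  fin_cases i <;> fin_cases j <;> simp

theorem gP_val : (gP K).val = !![0,1,0; 0,0,1; 1,0,0] := rfl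

theorem gP_sq : (gP K ^ 2).val = !![0,0,1; 1,0,0; 0,1,0] := by
  rw [pow_two, Units.val_mul, gP_val]
  ext i j
  fin_cases i <;> fin_cases j <;> simp [Matrix.mul_apply, Fin.sum_univ_three]

theorem gP_three : gP K ^ 3 = 1 := by
  apply Units.ext
  rw [pow_succ, Units.val_mul, gP_sq, gP_val]
  ext i j
  fin_cases i <;> fin_cases j <;> simp [Matrix.mul_apply, Fin.sum_univ_three]

theorem gP_gD (ζ : K) (h : ζ ≠ 0) (h7 : ζ ^ 7 = 1) : gP K * gD ζ h = gD ζ h ^ 2 * gP K := by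
  apply Units.ext
  rw [Units.val_mul, Units.val_mul, gD_pow]
  have h8 : (ζ ^ 2) ^ 4 = ζ := by linear_combination ζ * h7
  have h4 : (ζ ^ 2) ^ 2 = ζ ^ 4 := by ring
  change !![0,1,0; 0,0,1; 1,0,0] * Matrix.diagonal ![ζ, ζ ^ 2, ζ ^ 4]
    = _ * !![0,1,0; 0,0,1; 1,0,0]
  rw [h8, h4]
  ext i j
  fin_cases i <;> fin_cases j <;> simp [Matrix.mul_apply, Fin.sum_univ_three]

/-- The action of the cyclic group of order 3. -/
def psi : Multiplicative (ZMod 3) →* MulAut (Multiplicative (ZMod 7)) :=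
  zpowHom7 3 sqAut sqAut_pow

theorem psi_ne : psi ≠ 1 := by
  intro h
  apply sqAut_ne
  have h1 := DFunLike.congr_fun h (Multiplicative.ofAdd ((1 : ℕ) : ZMod 3))
  rw [psi, zpowHom7_ofNat, pow_one] at h1
  exact h1

theorem compat (ζ : K) (h : ζ ≠ 0) (h7 : ζ ^ 7 = 1) (k : ℕ) :
    ∀ n : Multiplicative (ZMod 7), zpowHom7 7 (gD ζ h) (gD_seven ζ h h7) ((sqAut ^ k) n)
      = gP K ^ k * zpowHom7 7 (gD ζ h) (gD_seven ζ h h7) n * (gP K ^ k)⁻¹ := by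
  induction k with
  | zero => intro n; simp
  | succ k ih =>
    intro n
    rw [pow_succ, MulAut.mul_apply, ih, sqAut_apply, map_pow, zpowHom7_apply, pow_succ (gP K)]
    have key : ∀ m : ℕ, (gD ζ h ^ m) ^ 2 = gP K * gD ζ h ^ m * (gP K)⁻¹ := by
      intro m
      rw [← conj_pow, gP_gD ζ h h7, mul_inv_cancel_right, ← pow_mul, ← pow_mul, mul_comm]
    rw [key]
    group

/-- The faithful linear representation. -/
def rep (ζ : K) (h : ζ ≠ 0) (h7 : ζ ^ 7 = 1) :
    (Multiplicative (ZMod 7) ⋊[psi] Multiplicative (ZMod 3)) →* GL (Fin 3) K :=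
  SemidirectProduct.lift (zpowHom7 7 (gD ζ h) (gD_seven ζ h h7)) (zpowHom7 3 (gP K) gP_three)
    (by
      intro g
      refine MonoidHom.ext fun n => ?_
      exact compat ζ h h7 (Multiplicative.toAdd g).val n)

/-- The induced projective representation. -/
def prep (ζ : K) (h : ζ ≠ 0) (h7 : ζ ^ 7 = 1) :
    (Multiplicative (ZMod 7) ⋊[psi] Multiplicative (ZMod 3)) →* PGL3 K :=
  (QuotientGroup.mk' _).comp (rep ζ h h7)

theorem rep_apply (ζ : K) (h : ζ ≠ 0) (h7 : ζ ^ 7 = 1) (x) :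
    rep ζ h h7 x = gD ζ h ^ (Multiplicative.toAdd x.left).val
      * gP K ^ (Multiplicative.toAdd x.right).val := rfl

theorem prep_mk (ζ : K) (h : ζ ≠ 0) (h7 : ζ ^ 7 = 1) (i k : ℕ) :
    (QuotientGroup.mk (gD ζ h ^ i * gP K ^ k) : PGL3 K) ∈ (prep ζ h h7).range := by
  refine ⟨SemidirectProduct.inl (Multiplicative.ofAdd (i : ZMod 7)) *
    SemidirectProduct.inr (Multiplicative.ofAdd (k : ZMod 3)), ?_⟩
  rw [prep, MonoidHom.comp_apply, map_mul, rep, SemidirectProduct.lift_inl,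
    SemidirectProduct.lift_inr, zpowHom7_ofNat, zpowHom7_ofNat]
  rfl

theorem prep_inj (ζ : K) (hζ : IsPrimitiveRoot ζ 7) (h : ζ ≠ 0) (h7 : ζ ^ 7 = 1) :
    Function.Injective (prep ζ h h7) := by
  rw [injective_iff_map_eq_one]
  intro x hx
  have hx' : (QuotientGroup.mk (rep ζ h h7 x) : PGL3 K) = 1 := hx
  rw [QuotientGroup.eq_one_iff,
    Matrix.GeneralLinearGroup.mem_center_iff_val_mem_range_scalar] at hx'
  obtain ⟨t, ht⟩ := hx'
  rw [rep_apply, Units.val_mul, gD_pow] at ht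
  obtain ⟨a, b⟩ := x
  simp only at ht
  have hb : (Multiplicative.toAdd b).val < 3 := ZMod.val_lt _
  have hb0 : (Multiplicative.toAdd b).val = 0 → b = 1 := fun hh => by
    rw [ZMod.val_eq_zero] at hh; exact hh
  have ha : (Multiplicative.toAdd a).val < 7 := ZMod.val_lt _
  have ha0 : (Multiplicative.toAdd a).val = 0 → a = 1 := fun hh => by
    rw [ZMod.val_eq_zero] at hh; exact hh
  generalize (Multiplicative.toAdd b).val = k at *
  generalize (Multiplicative.toAdd a).val = i at *
  have hi : ζ ^ i ≠ 0 := pow_ne_zero _ h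
  have e00 := congr_fun (congr_fun ht 0) 0
  have e11 := congr_fun (congr_fun ht 1) 1
  have e01 := congr_fun (congr_fun ht 0) 1
  have e02 := congr_fun (congr_fun ht 0) 2
  obtain rfl | rfl | rfl : k = 0 ∨ k = 1 ∨ k = 2 := by omega
  · have : ζ ^ i = 1 := by
      simp at e00 e11
      have : ζ ^ i * (ζ ^ i - 1) = 0 := by linear_combination e00 - e11
      rcases mul_eq_zero.1 this with h' | h'
      · exact absurd h' hi
      · linear_combination h'
    have hd := (hζ.pow_eq_one_iff_dvd i).1 this
    have : i = 0 := by omega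
    rw [ha0 this, hb0 rfl]
    rfl
  · rw [pow_one, gP_val] at e01
    simp [Matrix.mul_apply, Fin.sum_univ_three] at e01
    exact absurd e01.symm hi
  · rw [gP_sq] at e02
    simp [Matrix.mul_apply, Fin.sum_univ_three] at e02
    exact absurd e02.symm hi

theorem range_eq (ζ : K) (h : ζ ≠ 0) (h7 : ζ ^ 7 = 1) :
    (prep ζ h h7).range = Subgroup.closure
        {toPGL3 (Matrix.diagonal ![1, ζ, ζ ^ 3]), toPGL3 !![0,1,0; 0,0,1; 1,0,0]} := by
  have hd : (Matrix.diagonal ![1, ζ, ζ ^ 3]).det ≠ 0 := by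
    rw [Matrix.det_diagonal, Fin.prod_univ_three]; simp [h]
  have hD : toPGL3 (Matrix.diagonal ![1, ζ, ζ ^ 3]) = QuotientGroup.mk (gD ζ h) := by
    rw [toPGL3, dif_pos hd]
    apply mk_eq_of_smul _ _ ζ h
    change Matrix.diagonal ![ζ, ζ ^ 2, ζ ^ 4] = ζ • Matrix.diagonal ![1, ζ, ζ ^ 3]
    ext i j
    fin_cases i <;> fin_cases j <;> simp <;> ring
  have hP : toPGL3 !![0,1,0; 0,0,1; 1,0,0] = QuotientGroup.mk (gP K) := by
    rw [toPGL3, dif_pos detP]; rfl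
  rw [hD, hP]
  apply le_antisymm
  · rintro _ ⟨x, rfl⟩
    rw [prep, MonoidHom.comp_apply, rep_apply, map_mul, map_pow, map_pow]
    apply mul_mem
    · apply pow_mem
      exact Subgroup.subset_closure (Or.inl rfl)
    · apply pow_mem
      exact Subgroup.subset_closure (Or.inr rfl)
  · rw [Subgroup.closure_le]
    rintro _ (rfl | rfl)
    · have := prep_mk ζ h h7 1 0
      rwa [pow_one, pow_zero, mul_one] at this
    · have := prep_mk ζ h h7 0 1
      rwa [pow_one, pow_zero, one_mul] at this

/-- The quadratic map. -/
def FF (v : Fin 3 → K) : Fin 3 → K := ![v 2 ^ 2, v 0 ^ 2, v 1 ^ 2]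

theorem FF_gP (k : ℕ) : ∀ v : Fin 3 → K, FF ((gP K ^ k).val *ᵥ v) = (gP K ^ k).val *ᵥ FF v := by
  induction k with
  | zero => intro v; simp
  | succ k ih =>
    intro v
    rw [pow_succ, Units.val_mul, ← Matrix.mulVec_mulVec, ih, ← Matrix.mulVec_mulVec]
    congr 1
    rw [gP_val]
    ext j
    fin_cases j <;> simp [FF, Matrix.mulVec, dotProduct, Fin.sum_univ_three]

theorem FF_gD (ζ : K) (h : ζ ≠ 0) (h7 : ζ ^ 7 = 1) (i : ℕ) (v : Fin 3 → K) :
    FF ((gD ζ h ^ i).val *ᵥ v) = (gD ζ h ^ i).val *ᵥ FF v := by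
  rw [gD_pow]
  have h7' : (ζ ^ i) ^ 7 = 1 := by rw [← pow_mul, mul_comm, pow_mul, h7, one_pow]
  generalize ζ ^ i = x at *
  ext j
  fin_cases j
  · simp [FF, Matrix.mulVec_diagonal]
    linear_combination x * v 2 ^ 2 * h7'
  · simp [FF, Matrix.mulVec_diagonal]
    ring
  · simp [FF, Matrix.mulVec_diagonal]
    ring

theorem root_aux (ζ : K) (hζ : IsPrimitiveRoot ζ 7) (a b d c : K) (hc : c ≠ 0) (ha : a ≠ 0)
    (h1 : a ^ 2 = c * b) (h2 : b ^ 2 = c * d) (h3 : d ^ 2 = c * a) :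
    ∃ i : ℕ, ζ ^ i = c⁻¹ * a ∧ (ζ ^ i) ^ 2 = c⁻¹ * b ∧ (ζ ^ i) ^ 4 = c⁻¹ * d := by
  have hb : (c⁻¹ * a) ^ 2 = c⁻¹ * b := by field_simp; linear_combination h1
  have hd : (c⁻¹ * b) ^ 2 = c⁻¹ * d := by field_simp; linear_combination h2
  have he : (c⁻¹ * d) ^ 2 = c⁻¹ * a := by field_simp; linear_combination h3
  have hx : c⁻¹ * a ≠ 0 := mul_ne_zero (inv_ne_zero hc) ha
  rw [← hd, ← hb] at he
  have h7 : (c⁻¹ * a) ^ 7 = 1 := by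
    apply mul_right_cancel₀ hx
    linear_combination he
  obtain ⟨i, _, hi⟩ := hζ.eq_pow_of_pow_eq_one h7
  refine ⟨i, hi, by rw [hi, hb], ?_⟩
  rw [hi, ← hd, ← hb]
  ring

theorem aut_aux [CharZero K] (ζ : K) (hζ : IsPrimitiveRoot ζ 7) (h : ζ ≠ 0)
    (M : GL (Fin 3) K) (c : K) (hc : c ≠ 0)
    (hM : ∀ v : Fin 3 → K, FF (M.val *ᵥ v) = c • (M.val *ᵥ FF v)) :
    ∃ i k : ℕ, (gD ζ h ^ i * gP K ^ k).val = c⁻¹ • M.val := by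
  have hdet : M.val.det ≠ 0 := by
    have := M.isUnit
    rw [Matrix.isUnit_iff_isUnit_det] at this
    exact this.ne_zero
  generalize M.val = A at *
  have E : ∀ v : Fin 3 → K, ∀ j, FF (A *ᵥ v) j = c * (A *ᵥ FF v) j := by
    intro v j
    rw [hM v]; rfl
  have P : ∀ x y z : K,
      (A 2 0 * x + A 2 1 * y + A 2 2 * z) ^ 2 = c * (A 0 0 * z ^ 2 + A 0 1 * x ^ 2 + A 0 2 * y ^ 2) ∧
      (A 0 0 * x + A 0 1 * y + A 0 2 * z) ^ 2 = c * (A 1 0 * z ^ 2 + A 1 1 * x ^ 2 + A 1 2 * y ^ 2) ∧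
      (A 1 0 * x + A 1 1 * y + A 1 2 * z) ^ 2 = c * (A 2 0 * z ^ 2 + A 2 1 * x ^ 2 + A 2 2 * y ^ 2) := by
    intro x y z
    have e0 := E ![x, y, z] 0
    have e1 := E ![x, y, z] 1
    have e2 := E ![x, y, z] 2
    simp only [FF, Matrix.mulVec, dotProduct, Fin.sum_univ_three] at e0 e1 e2
    exact ⟨e0, e1, e2⟩
  have two : (2 : K) ≠ 0 := two_ne_zero
  obtain ⟨a0, a1, a2⟩ := P 1 0 0
  obtain ⟨b0, b1, b2⟩ := P 0 1 0
  obtain ⟨c0, c1, c2⟩ := P 0 0 1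
  obtain ⟨d0, d1, d2⟩ := P 1 1 0
  obtain ⟨f0, f1, f2⟩ := P 1 0 1
  obtain ⟨g0, g1, g2⟩ := P 0 1 1
  clear P E hM
  have x01 : A 0 0 * A 0 1 = 0 := by
    apply mul_left_cancel₀ two; linear_combination d1 - a1 - b1
  have x02 : A 0 0 * A 0 2 = 0 := by
    apply mul_left_cancel₀ two; linear_combination f1 - a1 - c1
  have x12 : A 0 1 * A 0 2 = 0 := by
    apply mul_left_cancel₀ two; linear_combination g1 - b1 - c1
  have r01 : A 0 0 ^ 2 = c * A 1 1 := by linear_combination a1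
  have r02 : A 0 1 ^ 2 = c * A 1 2 := by linear_combination b1
  have r00 : A 0 2 ^ 2 = c * A 1 0 := by linear_combination c1
  have s01 : A 1 0 ^ 2 = c * A 2 1 := by linear_combination a2
  have s02 : A 1 1 ^ 2 = c * A 2 2 := by linear_combination b2
  have s00 : A 1 2 ^ 2 = c * A 2 0 := by linear_combination c2
  have t01 : A 2 0 ^ 2 = c * A 0 1 := by linear_combination a0
  have t02 : A 2 1 ^ 2 = c * A 0 2 := by linear_combination b0
  have t00 : A 2 2 ^ 2 = c * A 0 0 := by linear_combination c0
  clear a0 a1 a2 b0 b1 b2 c0 c1 c2 d0 d1 d2 f0 f1 f2 g0 g1 g2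
  have Z : ∀ p q : K, p ^ 2 = c * q → p = 0 → q = 0 := by
    intro p q h1 h2
    rw [h2, zero_pow two_ne_zero] at h1
    exact (mul_eq_zero.1 h1.symm).resolve_left hc
  by_cases n0 : A 0 0 = 0
  · by_cases n1 : A 0 1 = 0
    · by_cases n2 : A 0 2 = 0
      · exfalso
        apply hdet
        rw [Matrix.det_fin_three, n0, n1, n2]
        ring
      · have z11 := Z _ _ r01 n0
        have z22 := Z _ _ s02 z11
        have z12 := Z _ _ r02 n1
        have z20 := Z _ _ s00 z12
        obtain ⟨i, h1, h2, h3⟩ := root_aux ζ hζ _ _ _ c hc n2 r00 s01 t02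
        refine ⟨i, 2, ?_⟩
        rw [Units.val_mul, gD_pow, gP_sq, h3, h2, h1]
        ext i j
        fin_cases i <;> fin_cases j <;>
          simp [Matrix.mul_apply, Fin.sum_univ_three, n0, n1, z11, z22, z12, z20]
    · have z02 := (mul_eq_zero.1 x12).resolve_left n1
      have z11 := Z _ _ r01 n0
      have z22 := Z _ _ s02 z11
      have z10 := Z _ _ r00 z02
      have z21 := Z _ _ s01 z10
      obtain ⟨i, h1, h2, h3⟩ := root_aux ζ hζ _ _ _ c hc n1 r02 s00 t01
      refine ⟨i, 1, ?_⟩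
      rw [Units.val_mul, gD_pow, pow_one, gP_val, h3, h2, h1]
      ext i j
      fin_cases i <;> fin_cases j <;>
        simp [Matrix.mul_apply, Fin.sum_univ_three, n0, z02, z11, z22, z10, z21]
  · have z01 := (mul_eq_zero.1 x01).resolve_left n0
    have z02 := (mul_eq_zero.1 x02).resolve_left n0
    have z12 := Z _ _ r02 z01
    have z20 := Z _ _ s00 z12
    have z10 := Z _ _ r00 z02
    have z21 := Z _ _ s01 z10
    obtain ⟨i, h1, h2, h3⟩ := root_aux ζ hζ _ _ _ c hc n0 r01 s02 t00
    refine ⟨i, 0, ?_⟩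
    rw [pow_zero, mul_one, gD_pow, h3, h2, h1]
    ext i j
    fin_cases i <;> fin_cases j <;> simp [z01, z02, z12, z20, z10, z21]

theorem aut_eq [CharZero K] (ζ : K) (hζ : IsPrimitiveRoot ζ 7) (h : ζ ≠ 0) (h7 : ζ ^ 7 = 1) :
    AutQ (FF : (Fin 3 → K) → (Fin 3 → K)) = ((prep ζ h h7).range : Set (PGL3 K)) := by
  ext φ
  constructor
  · rintro ⟨M, rfl, c, hc, hM⟩
    obtain ⟨i, k, hik⟩ := aut_aux ζ hζ h M c hc hM
    rw [mk_eq_of_smul M _ c⁻¹ (inv_ne_zero hc) hik]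
    exact prep_mk ζ h h7 i k
  · rintro ⟨x, rfl⟩
    refine ⟨rep ζ h h7 x, rfl, 1, one_ne_zero, fun v => ?_⟩
    rw [rep_apply, Units.val_mul, ← Matrix.mulVec_mulVec, FF_gD ζ h h7, FF_gP, one_smul,
      Matrix.mulVec_mulVec]

end

theorem stmt6 {K : Type*} [Field K] [IsAlgClosed K] [CharZero K]
    (ζ : K) (hζ : IsPrimitiveRoot ζ 7) :
    let H : Subgroup (PGL3 K) :=
      Subgroup.closure
        {toPGL3 (Matrix.diagonal ![1, ζ, ζ ^ 3]), toPGL3 !![0,1,0; 0,0,1; 1,0,0]}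
    AutQ (fun v : Fin 3 → K => ![v 2 ^ 2, v 0 ^ 2, v 1 ^ 2]) = ↑H ∧
      Nat.card H = 21 ∧
      ∃ ψ : Multiplicative (ZMod 3) →* MulAut (Multiplicative (ZMod 7)),
        ψ ≠ 1 ∧
          Nonempty (H ≃* (Multiplicative (ZMod 7) ⋊[ψ] Multiplicative (ZMod 3))) := by
  intro H
  have h : ζ ≠ 0 := hζ.ne_zero (by norm_num)
  have h7 : ζ ^ 7 = 1 := hζ.pow_eq_one
  have hH : (prep ζ h h7).range = H := range_eq ζ h h7
  have e : (Multiplicative (ZMod 7) ⋊[psi] Multiplicative (ZMod 3)) ≃* H :=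
    (MonoidHom.ofInjective (prep_inj ζ hζ h h7)).trans (MulEquiv.subgroupCongr hH)
  refine ⟨?_, ?_, psi, psi_ne, ⟨e.symm⟩⟩
  · rw [← hH]
    exact aut_eq ζ hζ h h7
  · rw [← Nat.card_congr e.toEquiv, SemidirectProduct.card]
    simp
end
end

section
/- Let K be an algebraically closed field of characteristic 0, let p ≥ 3 be prime, and let F = (F₀, F₁, F₂) be a triple of homogeneous polynomials of degree 2 in K[X,Y,Z], not all zero. If Aut(F) contains a subgroup isomorphic to (ℤ/pℤ) × (ℤ/pℤ), then either F₀, F₁, F₂ are algebraically dependent over K (the induced rational self-map of P² is not dominant), or there exist homogeneous linear forms L, L₀, L₁, L₂ ∈ K[X,Y,Z] with Fᵢ = L·Lᵢ for i = 0, 1, 2 (the induced rational self-map of P² is a linear map). -/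
open Matrix MvPolynomial
open scoped Classical

noncomputable section

/-- Decomposition of a vector along eigenvectors of an endomorphism of finite order. -/
lemma eig_decomp {K V : Type*} [Field K] [AddCommGroup V] [Module K V]
    (p : ℕ) (hp1 : 1 < p) (ζ : K) (hζ : IsPrimitiveRoot ζ p)
    (f : Module.End K V) (hf : f ^ p = 1) (v : V) :
    ∃ w : ℕ → V, (p : K) • v = ∑ j ∈ Finset.range p, w j ∧
      (∀ j, ∃ μ : K, f (w j) = μ • w j) ∧
      ∀ g : Module.End K V, Commute g f → ∀ μ : K, g v = μ • v → ∀ j, g (w j) = μ • w j := by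
  have hζ0 : ζ ≠ 0 := hζ.ne_zero (by omega)
  refine ⟨fun j => ∑ r ∈ Finset.range p, (ζ ^ j) ^ r • (f ^ r) v, ?_, ?_, ?_⟩
  · rw [Finset.sum_comm]
    rw [Finset.sum_eq_single 0]
    · simp [Nat.cast_smul_eq_nsmul]
    · intro r hr hr0
      rw [← Finset.sum_smul]
      have hr' := Finset.mem_range.1 hr
      have h1 : ζ ^ r ≠ 1 := by
        intro h
        have := (hζ.pow_eq_one_iff_dvd r).1 h
        exact absurd (Nat.le_of_dvd (by omega) this) (by omega)
      have h2 : ∑ j ∈ Finset.range p, (ζ ^ j) ^ r = 0 := by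
        have h3 : ∀ j, (ζ ^ j) ^ r = (ζ ^ r) ^ j := fun j => by rw [← pow_mul, ← pow_mul, mul_comm]
        simp only [h3]
        have h4 := geom_sum_mul (ζ ^ r) p
        rw [← pow_mul, mul_comm r p, pow_mul, hζ.pow_eq_one, one_pow, sub_self] at h4
        exact (mul_eq_zero.1 h4).resolve_right (sub_ne_zero.2 h1)
      rw [h2, zero_smul]
    · intro h
      exact absurd (Finset.mem_range.2 (by omega)) h
  · intro j
    refine ⟨(ζ ^ j)⁻¹, ?_⟩
    have hj : ζ ^ j ≠ 0 := pow_ne_zero _ hζ0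
    rw [eq_inv_smul_iff₀ hj, map_sum, Finset.smul_sum]
    have h' := Finset.sum_range_succ' (fun r => (ζ ^ j) ^ r • (f ^ r) v) p
    have h'' := Finset.sum_range_succ (fun r => (ζ ^ j) ^ r • (f ^ r) v) p
    rw [h''] at h'
    have e : (ζ ^ j) ^ p = 1 := by rw [← pow_mul, mul_comm, pow_mul, hζ.pow_eq_one, one_pow]
    simp only [hf, e, pow_zero] at h'
    have h3 := add_right_cancel h'
    refine Eq.trans ?_ h3.symm
    refine Finset.sum_congr rfl fun r _ => ?_
    rw [map_smul, smul_smul, pow_succ' f, pow_succ' (ζ ^ j)]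
    rfl
  · intro g hg μ hgv j
    rw [map_sum, Finset.smul_sum]
    refine Finset.sum_congr rfl fun r _ => ?_
    have : g ((f ^ r) v) = (f ^ r) (g v) := by
      have := congrArg (fun h : Module.End K V => h v) (hg.pow_right r).eq
      exact this
    rw [map_smul, this, hgv, map_smul, smul_comm]

/-- Simultaneous diagonalisation of two commuting matrices of order dividing `p`. -/
lemma simul_diag {K : Type*} [Field K] [CharZero K]
    (p : ℕ) (hp1 : 1 < p) (ζ : K) (hζ : IsPrimitiveRoot ζ p)
    (A B : Matrix (Fin 3) (Fin 3) K) (hA : A ^ p = 1) (hB : B ^ p = 1) (hAB : A * B = B * A) :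
    ∃ (Q R : Matrix (Fin 3) (Fin 3) K) (α β : Fin 3 → K), Q * R = 1 ∧ R * Q = 1 ∧
      A * Q = Q * Matrix.diagonal α ∧ B * Q = Q * Matrix.diagonal β := by
  let f := Matrix.toLinAlgEquiv' A
  let g := Matrix.toLinAlgEquiv' B
  have hf : f ^ p = 1 := by rw [← map_pow, hA, map_one]
  have hg : g ^ p = 1 := by rw [← map_pow, hB, map_one]
  have hfg : Commute f g := by
    change f * g = g * f
    rw [← map_mul, hAB, map_mul]
  let S : Set (Fin 3 → K) := {v | (∃ μ : K, f v = μ • v) ∧ ∃ μ : K, g v = μ • v}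
  have hp0 : (p : K) ≠ 0 := by exact_mod_cast (by omega : p ≠ 0)
  have hS : ⊤ ≤ Submodule.span K S := by
    intro v _
    obtain ⟨w, hw, hwe, -⟩ := eig_decomp p hp1 ζ hζ f hf v
    have h1 : ∀ j, w j ∈ Submodule.span K S := by
      intro j
      obtain ⟨u, hu, hue, huc⟩ := eig_decomp p hp1 ζ hζ g hg (w j)
      obtain ⟨μ, hμ⟩ := hwe j
      have h2 : (p : K) • w j ∈ Submodule.span K S := by
        rw [hu]
        exact Submodule.sum_mem _ fun i _ =>
          Submodule.subset_span ⟨⟨μ, huc f hfg μ hμ i⟩, hue i⟩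
      exact (Submodule.smul_mem_iff _ hp0).1 h2
    have h2 : (p : K) • v ∈ Submodule.span K S := by
      rw [hw]
      exact Submodule.sum_mem _ fun i _ => h1 i
    exact (Submodule.smul_mem_iff _ hp0).1 h2
  let b0 := Module.Basis.ofSpan hS
  have : Finite ((linearIndepOn_empty K id).extend (Set.empty_subset S)) :=
    Module.Finite.finite_basis b0
  have := Fintype.ofFinite ((linearIndepOn_empty K id).extend (Set.empty_subset S))
  have hc : Fintype.card ((linearIndepOn_empty K id).extend (Set.empty_subset S)) = 3 := by
    rw [← Module.finrank_eq_card_basis b0]; simp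
  let b := b0.reindex (Fintype.equivFinOfCardEq hc)
  have hb : ∀ i, b i ∈ S := by
    intro i
    apply Module.Basis.ofSpan_subset hS
    simp [b, b0]
  choose α hα using fun i => (hb i).1
  choose β hβ using fun i => (hb i).2
  have hQ : ∀ (M : Matrix (Fin 3) (Fin 3) K) (μ : Fin 3 → K),
      (∀ i, Matrix.toLinAlgEquiv' M (b i) = μ i • b i) →
      M * (Matrix.of fun i j => b j i) = (Matrix.of fun i j => b j i) * Matrix.diagonal μ := by
    intro M μ h
    ext i j
    have := congrFun (h j) i
    rw [Matrix.mul_diagonal]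
    simp only [Matrix.toLinAlgEquiv'_apply, Pi.smul_apply, smul_eq_mul] at this
    rw [Matrix.of_apply, mul_comm, ← this]
    rfl
  have e : (Matrix.of fun i j => b j i) = (Pi.basisFun K (Fin 3)).toMatrix b := by
    ext i j; simp [Module.Basis.toMatrix_apply]
  refine ⟨Matrix.of fun i j => b j i, b.toMatrix (Pi.basisFun K (Fin 3)), α, β, ?_, ?_,
    hQ A α hα, hQ B β hβ⟩
  · rw [e]; exact Module.Basis.toMatrix_mul_toMatrix_flip _ _
  · rw [e]; exact Module.Basis.toMatrix_mul_toMatrix_flip _ _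

lemma eval_smul_hom {K : Type*} [Field K] (P : MvPolynomial (Fin 3) K) (h : P.IsHomogeneous 2)
    (l : K) (v : Fin 3 → K) : MvPolynomial.eval (l • v) P = l ^ 2 * MvPolynomial.eval v P := by
  rw [MvPolynomial.eval_eq, MvPolynomial.eval_eq, Finset.mul_sum]
  refine Finset.sum_congr rfl fun d hd => ?_
  have := h.degree_eq_sum_deg_support hd
  simp only [Pi.smul_apply, smul_eq_mul, mul_pow, Finset.prod_mul_distrib, Finset.prod_pow_eq_pow_sum]
  rw [← this]; ring

lemma coeff_scale {K : Type*} [Field K] [Infinite K] (P : MvPolynomial (Fin 3) K) (α : Fin 3 → K)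
    (c : K)
    (h : ∀ v : Fin 3 → K, MvPolynomial.eval (fun i => α i * v i) P = c * MvPolynomial.eval v P)
    (m : Fin 3 →₀ ℕ) (hm : P.coeff m ≠ 0) : ∏ i, α i ^ m i = c := by
  have key : ∀ P : MvPolynomial (Fin 3) K,
      (MvPolynomial.bind₁ (fun i => C (α i) * X i) P).coeff m = (∏ i, α i ^ m i) * P.coeff m := by
    intro P
    induction P using MvPolynomial.induction_on' with
    | monomial u a =>
      have : (MvPolynomial.bind₁ (fun i => C (α i) * X i)) (MvPolynomial.monomial u a)
          = MvPolynomial.monomial u ((∏ i, α i ^ u i) * a) := by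
        apply MvPolynomial.funext
        intro x
        simp [MvPolynomial.bind₁_monomial, MvPolynomial.eval_monomial, Finsupp.prod_fintype,
          mul_pow, Fin.prod_univ_three, Finset.prod_mul_distrib]
        rw [Finset.prod_subset (Finset.subset_univ _)]
        · simp [Fin.prod_univ_three]; ring
        · intro i _ hi
          simp at hi; simp [hi]
      rw [this, coeff_monomial, coeff_monomial]
      split_ifs with h
      · rw [h]
      · simp
    | add p q hp hq => rw [map_add, coeff_add, coeff_add, hp, hq]; ring
  have h2 : MvPolynomial.bind₁ (fun i => C (α i) * X i) P = C c * P := by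
    apply MvPolynomial.funext
    intro v
    rw [map_mul, eval_C, ← h v, MvPolynomial.eval, MvPolynomial.eval₂Hom_bind₁]
    simp
  have h3 := key P
  rw [h2, coeff_C_mul] at h3
  exact (mul_right_cancel₀ hm h3).symm

lemma indep_zmod (p : ℕ) [Fact p.Prime] (a b x : Fin 3 → ZMod p)
    (h : ∀ r s c : ZMod p, (∀ i, r * a i + s * b i = c) → r = 0 ∧ s = 0)
    (h1 : ∑ j, x j = 0) (ha : ∑ j, a j * x j = 0) (hb : ∑ j, b j * x j = 0) : x = 0 := by
  by_contra hx
  have h0 : (Matrix.of ![a, b, fun _ => 1]).det = 0 := by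
    apply Matrix.exists_mulVec_eq_zero_iff.1
    refine ⟨x, hx, ?_⟩
    ext i
    fin_cases i
    · simpa [Matrix.mulVec, dotProduct] using ha
    · simpa [Matrix.mulVec, dotProduct] using hb
    · simpa [Matrix.mulVec, dotProduct] using h1
  obtain ⟨y, hy, hy0⟩ := Matrix.exists_vecMul_eq_zero_iff.2 h0
  have e : ∀ i, y 0 * a i + y 1 * b i + y 2 = 0 := by
    intro i
    have := congrFun hy0 i
    simpa [Matrix.vecMul, dotProduct, Fin.sum_univ_three] using this
  obtain ⟨e0, e1⟩ := h (y 0) (y 1) (-y 2) (fun i => by linear_combination e i)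
  apply hy
  ext i
  have := e 0
  rw [e0, e1] at this
  fin_cases i
  · exact e0
  · exact e1
  · simpa using this

lemma combi (p : ℕ) (hp3 : 3 ≤ p) (m : Fin 3 → Fin 3 → ℕ)
    (hs : ∀ i, m i 0 + m i 1 + m i 2 = 2)
    (hc : ∀ i i' j, ((m i j : ZMod p) - (if i = j then 1 else 0))
      = (m i' j : ZMod p) - (if i' = j then 1 else 0)) :
    ∃ k, ∀ i j, m i j = (if k = j then 1 else 0) + (if i = j then 1 else 0) := by
  have hle : ∀ i j, m i j ≤ 2 := by
    intro i j
    have := hs i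
    fin_cases j <;> simp <;> omega
  have hcn : ∀ x y : ℕ, x ≤ 3 → y ≤ 3 → (x : ZMod p) = y → x = y ∨ x = y + 3 ∨ y = x + 3 := by
    intro x y hx hy h
    rw [ZMod.natCast_eq_natCast_iff, Nat.modEq_iff_dvd] at h
    obtain ⟨q, hq⟩ := h
    have hp' : (3 : ℤ) ≤ p := by exact_mod_cast hp3
    have : q = 0 ∨ 1 ≤ q ∨ q ≤ -1 := by omega
    rcases this with h | h | h
    · subst h; left; omega
    · right; right; have : (p : ℤ) * q ≥ 3 := by nlinarith
      omega
    · right; left; have : (p : ℤ) * q ≤ -3 := by nlinarith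
      omega
  have hc' : ∀ i i' j, m i j + (if i' = j then 1 else 0) = m i' j + (if i = j then 1 else 0) ∨
      m i j + (if i' = j then 1 else 0) = m i' j + (if i = j then 1 else 0) + 3 ∨
      m i' j + (if i = j then 1 else 0) = m i j + (if i' = j then 1 else 0) + 3 := by
    intro i i' j
    apply hcn
    · have := hle i j; split_ifs <;> omega
    · have := hle i' j; split_ifs <;> omega
    · have := hc i i' j
      push_cast
      linear_combination this
  have s0 := hs 0
  have s1 := hs 1
  have s2 := hs 2
  have a0 := hc' 1 2 0
  have a1 := hc' 0 2 1
  have a2 := hc' 0 1 2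
  have b0 := hc' 0 1 0
  have b1 := hc' 1 0 1
  have b2 := hc' 2 0 2
  simp at a0 a1 a2 b0 b1 b2
  have a0 : m 1 0 = m 2 0 := by omega
  have a1 : m 0 1 = m 2 1 := by omega
  have a2 : m 0 2 = m 1 2 := by omega
  have b0 : m 0 0 = m 1 0 + 1 := by omega
  have b1 : m 1 1 = m 0 1 + 1 := by omega
  have b2 : m 2 2 = m 0 2 + 1 := by omega
  have : m 1 0 = 1 ∨ m 0 1 = 1 ∨ m 0 2 = 1 := by omega
  rcases this with h | h | h
  · refine ⟨0, fun i j => ?_⟩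
    fin_cases i <;> fin_cases j <;> simp <;> omega
  · refine ⟨1, fun i j => ?_⟩
    fin_cases i <;> fin_cases j <;> simp <;> omega
  · refine ⟨2, fun i j => ?_⟩
    fin_cases i <;> fin_cases j <;> simp <;> omega

lemma diag_case {K : Type*} [Field K] [Infinite K] (p : ℕ) (hp : p.Prime) (hp3 : 3 ≤ p)
    (ζ : K) (hζ : IsPrimitiveRoot ζ p)
    (G : Fin 3 → MvPolynomial (Fin 3) K) (hG : ∀ i, (G i).IsHomogeneous 2)
    (a b : Fin 3 → ℕ)
    (hind : ∀ r s c : ZMod p, (∀ i, r * (a i : ZMod p) + s * (b i : ZMod p) = c) → r = 0 ∧ s = 0)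
    (ha : ∀ i (v : Fin 3 → K), MvPolynomial.eval (fun k => ζ ^ a k * v k) (G i)
      = ζ ^ a i * MvPolynomial.eval v (G i))
    (hb : ∀ i (v : Fin 3 → K), MvPolynomial.eval (fun k => ζ ^ b k * v k) (G i)
      = ζ ^ b i * MvPolynomial.eval v (G i)) :
    (∃ i, G i = 0) ∨ ∃ (k : Fin 3) (c : Fin 3 → K), ∀ i, G i = C (c i) * (X k * X i) := by
  have : Fact p.Prime := ⟨hp⟩
  by_cases h0 : ∃ i, G i = 0
  · exact Or.inl h0
  right
  push Not at h0
  have cast_eq : ∀ x y : ℕ, ζ ^ x = ζ ^ y → (x : ZMod p) = y := by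
    intro x y h
    rw [ZMod.natCast_eq_natCast_iff]
    have hζ0 : ζ ≠ 0 := hζ.ne_zero (by omega)
    rw [Nat.modEq_iff_dvd, ← hζ.zpow_eq_one_iff_dvd, zpow_sub₀ hζ0, zpow_natCast, zpow_natCast, h]
    exact div_self (pow_ne_zero _ hζ0)
  have hexp : ∀ (e : Fin 3 → ℕ), (∀ i (v : Fin 3 → K),
      MvPolynomial.eval (fun k => ζ ^ e k * v k) (G i) = ζ ^ e i * MvPolynomial.eval v (G i)) →
      ∀ i m, (G i).coeff m ≠ 0 → ∑ j, (e j : ZMod p) * (m j : ZMod p) = e i := by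
    intro e he i m hm
    have := coeff_scale (G i) (fun k => ζ ^ e k) (ζ ^ e i) (he i) m hm
    simp only [← pow_mul, Finset.prod_pow_eq_pow_sum] at this
    have := cast_eq _ _ this
    push_cast at this
    exact this
  have hdeg : ∀ i m, (G i).coeff m ≠ 0 → m 0 + m 1 + m 2 = 2 := by
    intro i m hm
    have h := hG i hm
    simpa [Finsupp.weight_apply, Finsupp.sum_fintype, Fin.sum_univ_three] using h
  have hcong : ∀ i m i' m', (G i).coeff m ≠ 0 → (G i').coeff m' ≠ 0 → ∀ j,
      ((m j : ZMod p) - (if i = j then 1 else 0))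
      = (m' j : ZMod p) - (if i' = j then 1 else 0) := by
    intro i m i' m' hm hm' j
    have hx := indep_zmod p (fun j => (a j : ZMod p)) (fun j => (b j : ZMod p))
      (fun j => ((m j : ZMod p) - (if i = j then 1 else 0))
        - ((m' j : ZMod p) - (if i' = j then 1 else 0))) hind ?_ ?_ ?_
    · exact sub_eq_zero.1 (congrFun hx j)
    · have e1 : ((m 0 + m 1 + m 2 : ℕ) : ZMod p) = (2 : ℕ) := by rw [hdeg i m hm]
      have e2 : ((m' 0 + m' 1 + m' 2 : ℕ) : ZMod p) = (2 : ℕ) := by rw [hdeg i' m' hm']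
      simp only [Finset.sum_sub_distrib, Finset.sum_ite_eq, Finset.mem_univ, if_true,
        Fin.sum_univ_three (fun j => ((m j : ℕ) : ZMod p)),
        Fin.sum_univ_three (fun j => ((m' j : ℕ) : ZMod p))]
      push_cast at e1 e2
      linear_combination e1 - e2
    · have e1 := hexp a ha i m hm
      have e2 := hexp a ha i' m' hm'
      simp only [mul_sub, Finset.sum_sub_distrib, mul_ite, mul_one, mul_zero, Finset.sum_ite_eq,
        Finset.mem_univ, if_true]
      linear_combination e1 - e2
    · have e1 := hexp b hb i m hm
      have e2 := hexp b hb i' m' hm'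
      simp only [mul_sub, Finset.sum_sub_distrib, mul_ite, mul_one, mul_zero, Finset.sum_ite_eq,
        Finset.mem_univ, if_true]
      linear_combination e1 - e2
  choose m hm using fun i => MvPolynomial.ne_zero_iff.1 (h0 i)
  obtain ⟨k, hk⟩ := combi p hp3 (fun i j => m i j) (fun i => hdeg i _ (hm i))
    (fun i i' j => hcong i (m i) i' (m i') (hm i) (hm i') j)
  refine ⟨k, fun i => (G i).coeff (m i), fun i => ?_⟩
  have hmi : m i = Finsupp.single k 1 + Finsupp.single i 1 := by
    ext j
    simp [hk i j, Finsupp.single_apply]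
  have e : C ((G i).coeff (m i)) * (X k * X i) = monomial (m i) ((G i).coeff (m i)) := by
    generalize (G i).coeff (m i) = q
    rw [hmi]
    simp only [X, C_mul_monomial, monomial_mul]
    simp
  rw [e]
  ext n
  rw [coeff_monomial]
  split_ifs with h
  · rw [h]
  · by_contra hn
    apply h
    ext j
    have hj := hcong i (m i) i n (hm i) hn j
    have hj := sub_left_injective hj
    rw [ZMod.natCast_eq_natCast_iff] at hj
    have d1 := hdeg i n hn
    have d2 := hdeg i (m i) (hm i)
    have l1 : n j < p := by fin_cases j <;> simp <;> omega
    have l2 : m i j < p := by fin_cases j <;> simp <;> omega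
    exact Nat.ModEq.eq_of_lt_of_lt hj l2 l1

theorem stmt8 {K : Type*} [Field K] [IsAlgClosed K] [CharZero K]
    (p : ℕ) (hp : p.Prime) (hp3 : 3 ≤ p)
    (F : Fin 3 → MvPolynomial (Fin 3) K)
    (hhom : ∀ i, (F i).IsHomogeneous 2) (hne : F ≠ 0)
    (H : Subgroup (PGL3 K))
    (hsub : (H : Set (PGL3 K)) ⊆ AutQ (fun v j => MvPolynomial.eval v (F j)))
    (hiso : Nonempty (H ≃* (Multiplicative (ZMod p) × Multiplicative (ZMod p)))) :
    ¬ AlgebraicIndependent K F ∨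
      ∃ L L₀ L₁ L₂ : MvPolynomial (Fin 3) K,
        L.IsHomogeneous 1 ∧ L₀.IsHomogeneous 1 ∧ L₁.IsHomogeneous 1 ∧ L₂.IsHomogeneous 1 ∧
        F 0 = L * L₀ ∧ F 1 = L * L₁ ∧ F 2 = L * L₂ := by
  have : Fact p.Prime := ⟨hp⟩
  have hp1 : 1 < p := hp.one_lt
  have : NeZero p := ⟨hp.ne_zero⟩
  have : NeZero (p : K) := ⟨by exact_mod_cast hp.ne_zero⟩
  have hinf : Infinite K := inferInstance
  obtain ⟨ζ, hζ⟩ := HasEnoughRootsOfUnity.exists_primitiveRoot K p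
  obtain ⟨iso⟩ := hiso
  set f : (Fin 3 → K) → (Fin 3 → K) := fun v j => MvPolynomial.eval v (F j) with hfdef
  have hf2 : ∀ (l : K) v, f (l • v) = l ^ 2 • f v := by
    intro l v
    ext j
    exact eval_smul_hom (F j) (hhom j) l v
  have hf0 : ∃ v, f v ≠ 0 := by
    by_contra h
    push Not at h
    apply hne
    ext1 j
    apply MvPolynomial.funext
    intro v
    simpa using congrFun (h v) j
  obtain ⟨v0, hv0⟩ := hf0
  -- the exact stabiliser
  let S : Subgroup (GL (Fin 3) K) :=
    { carrier := {M | ∀ v, f (M.val *ᵥ v) = M.val *ᵥ f v}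
      mul_mem' := by
        intro M N hM hN v
        change f ((M.val * N.val) *ᵥ v) = (M.val * N.val) *ᵥ f v
        rw [← Matrix.mulVec_mulVec, hM, hN, Matrix.mulVec_mulVec]
      one_mem' := by intro v; simp
      inv_mem' := by
        intro M hM v
        have h1 : M.val * (M⁻¹).val = 1 := by rw [← Units.val_mul, mul_inv_cancel, Units.val_one]
        have h2 : (M⁻¹).val * M.val = 1 := by rw [← Units.val_mul, inv_mul_cancel, Units.val_one]
        have h := hM ((M⁻¹).val *ᵥ v)
        rw [Matrix.mulVec_mulVec, h1, Matrix.one_mulVec] at h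
        rw [h, Matrix.mulVec_mulVec, h2, Matrix.one_mulVec] }
  have huniq : ∀ M ∈ S, (QuotientGroup.mk M : PGL3 K) = 1 → M = 1 := by
    intro M hM h
    rw [QuotientGroup.eq_one_iff, Matrix.GeneralLinearGroup.mem_center_iff_val_mem_range_scalar] at h
    obtain ⟨l, hl⟩ := h
    have h1 := hM v0
    have hsc : ∀ w : Fin 3 → K, M.val *ᵥ w = l • w := by
      intro w
      rw [← hl, Matrix.scalar_apply]
      ext i
      simp [Matrix.mulVec_diagonal]
    rw [hsc, hsc, hf2] at h1
    have hl0 : l ≠ 0 := by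
      intro h0
      apply M.ne_zero
      rw [← hl, h0, map_zero]
    have h2 : (l ^ 2 - l) • f v0 = 0 := by rw [sub_smul, h1, sub_self]
    have h3 := (smul_eq_zero.1 h2).resolve_right hv0
    have h4 : l * (l - 1) = 0 := by linear_combination h3
    have h5 : l = 1 := sub_eq_zero.1 ((mul_eq_zero.1 h4).resolve_left hl0)
    apply Units.ext
    rw [← hl, h5, map_one, Units.val_one]
  have hlift : ∀ φ ∈ H, ∃ M ∈ S, (QuotientGroup.mk M : PGL3 K) = φ := by
    intro φ hφ
    obtain ⟨M, hM, c, hc, h⟩ := hsub hφ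
    refine ⟨Matrix.GeneralLinearGroup.scalar (Fin 3) (Units.mk0 c hc)⁻¹ * M, ?_, ?_⟩
    · intro v
      have hsc : ∀ w : Fin 3 → K, (Matrix.GeneralLinearGroup.scalar (Fin 3)
          (Units.mk0 c hc)⁻¹ * M).val *ᵥ w = c⁻¹ • (M.val *ᵥ w) := by
        intro w
        rw [Units.val_mul, Matrix.GeneralLinearGroup.coe_scalar, ← Matrix.mulVec_mulVec,
          Matrix.scalar_apply]
        ext i
        simp [Matrix.mulVec_diagonal]
      rw [hsc, hsc, hf2, h v, smul_smul]
      congr 1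
      field_simp
    · rw [QuotientGroup.mk_mul, hM]
      have : (QuotientGroup.mk (Matrix.GeneralLinearGroup.scalar (Fin 3) (Units.mk0 c hc)⁻¹) : PGL3 K)
          = 1 := by
        rw [QuotientGroup.eq_one_iff, Matrix.GeneralLinearGroup.center_eq_range_scalar]
        exact ⟨_, rfl⟩
      rw [this, one_mul]
  let x1 := iso.symm (Multiplicative.ofAdd 1, 1)
  let x2 := iso.symm (1, Multiplicative.ofAdd 1)
  obtain ⟨A, hAS, hA⟩ := hlift x1 x1.2
  obtain ⟨B, hBS, hB⟩ := hlift x2 x2.2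
  have hpow : ∀ z : Multiplicative (ZMod p) × Multiplicative (ZMod p), z ^ p = 1 := by
    rintro ⟨u, w⟩
    ext
    · change p • u.toAdd = 0
      simp
    · change p • w.toAdd = 0
      simp
  have hx : ∀ z, ((iso.symm z : H) : PGL3 K) ^ p = 1 := by
    intro z
    rw [← Subgroup.coe_pow, ← map_pow, hpow, map_one, Subgroup.coe_one]
  have hAp : A ^ p = 1 := huniq _ (S.pow_mem hAS p) (by
    rw [QuotientGroup.mk_pow, hA]; exact hx _)
  have hBp : B ^ p = 1 := huniq _ (S.pow_mem hBS p) (by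
    rw [QuotientGroup.mk_pow, hB]; exact hx _)
  have hcomm : A * B = B * A := by
    have hx12 : (x1 : PGL3 K) * x2 = x2 * x1 := by
      rw [← Subgroup.coe_mul, ← Subgroup.coe_mul, ← map_mul, ← map_mul, mul_comm]
    have := huniq ((A * B) * (B * A)⁻¹)
      (S.mul_mem (S.mul_mem hAS hBS) (S.inv_mem (S.mul_mem hBS hAS))) (by
        rw [QuotientGroup.mk_mul, QuotientGroup.mk_inv, QuotientGroup.mk_mul, QuotientGroup.mk_mul,
          hA, hB, hx12, mul_inv_cancel])
    exact mul_inv_eq_one.1 this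
  have hAp' : A.val ^ p = 1 := by rw [← Units.val_pow_eq_pow_val, hAp, Units.val_one]
  have hBp' : B.val ^ p = 1 := by rw [← Units.val_pow_eq_pow_val, hBp, Units.val_one]
  obtain ⟨Q, R, α, β, hQR, hRQ, hAQ, hBQ⟩ := simul_diag p hp1 ζ hζ A.val B.val hAp' hBp'
    (by rw [← Units.val_mul, hcomm, Units.val_mul])
  have hroot : ∀ (M : Matrix (Fin 3) (Fin 3) K) (μ : Fin 3 → K), M ^ p = 1 →
      M * Q = Q * Matrix.diagonal μ → ∀ i, ∃ a : ℕ, μ i = ζ ^ a := by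
    intro M μ hM h i
    have h1 : SemiconjBy Q (Matrix.diagonal μ) M := h.symm
    have h2 := (h1.pow_right p).eq
    rw [hM, one_mul] at h2
    have h3 : Matrix.diagonal μ ^ p = 1 := by
      rw [← Matrix.one_mul (Matrix.diagonal μ ^ p), ← hRQ, Matrix.mul_assoc, h2]
    rw [Matrix.diagonal_pow, ← Matrix.diagonal_one, Matrix.diagonal_injective.eq_iff] at h3
    have h4 : μ i ^ p = 1 := congrFun h3 i
    obtain ⟨a, -, ha⟩ := hζ.eq_pow_of_pow_eq_one h4
    exact ⟨a, ha.symm⟩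
  choose a ha using hroot A.val α hAp' hAQ
  choose b hb using hroot B.val β hBp' hBQ
  have hind : ∀ r s c : ZMod p, (∀ i, r * (a i : ZMod p) + s * (b i : ZMod p) = c) →
      r = 0 ∧ s = 0 := by
    intro r s c h
    have h1 : ∀ i, α i ^ r.val * β i ^ s.val = ζ ^ c.val := by
      intro i
      have hζ0 : ζ ≠ 0 := hζ.ne_zero hp.ne_zero
      rw [ha, hb, ← pow_mul, ← pow_mul, ← pow_add]
      have h2 : ((a i * r.val + b i * s.val : ℕ) : ZMod p) = (c.val : ℕ) := by
        push_cast
        rw [ZMod.natCast_zmod_val, ZMod.natCast_zmod_val, ZMod.natCast_zmod_val, ← h i]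
        ring
      rw [ZMod.natCast_eq_natCast_iff, Nat.modEq_iff_dvd, ← hζ.zpow_eq_one_iff_dvd,
        zpow_sub₀ hζ0, zpow_natCast, zpow_natCast] at h2
      exact (eq_of_div_eq_one h2).symm
    have s1 : SemiconjBy Q (Matrix.diagonal α) A.val := hAQ.symm
    have s2 : SemiconjBy Q (Matrix.diagonal β) B.val := hBQ.symm
    have s3 := ((s1.pow_right r.val).mul_right (s2.pow_right s.val)).eq
    have e : Matrix.diagonal α ^ r.val * Matrix.diagonal β ^ s.val
        = Matrix.scalar (Fin 3) (ζ ^ c.val) := by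
      rw [Matrix.diagonal_pow, Matrix.diagonal_pow, Matrix.diagonal_mul_diagonal,
        Matrix.scalar_apply]
      congr 1
      ext i
      exact h1 i
    rw [e, ← (Matrix.scalar_commute (ζ ^ c.val) (fun r' => Commute.all _ r') Q).eq] at s3
    have s4 : A.val ^ r.val * B.val ^ s.val = Matrix.scalar (Fin 3) (ζ ^ c.val) := by
      have := congrArg (· * R) s3
      simp only [Matrix.mul_assoc, hQR, Matrix.mul_one] at this
      exact this.symm
    have s5 : (QuotientGroup.mk (A ^ r.val * B ^ s.val) : PGL3 K) = 1 := by
      rw [QuotientGroup.eq_one_iff,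
        Matrix.GeneralLinearGroup.mem_center_iff_val_mem_range_scalar]
      exact ⟨_, s4.symm⟩
    rw [QuotientGroup.mk_mul, QuotientGroup.mk_pow, QuotientGroup.mk_pow, hA, hB,
      ← Subgroup.coe_pow, ← Subgroup.coe_pow, ← Subgroup.coe_mul, OneMemClass.coe_eq_one] at s5
    simp only [x1, x2] at s5
    rw [← map_pow, ← map_pow, ← map_mul, map_eq_one_iff _ iso.symm.injective] at s5
    have t1 := congrArg (fun z => Multiplicative.toAdd z.1) s5
    have t2 := congrArg (fun z => Multiplicative.toAdd z.2) s5
    constructor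
    · simpa using t1
    · simpa using t2
  -- the conjugated map
  let G : Fin 3 → MvPolynomial (Fin 3) K := fun i =>
    ∑ l, C (R i l) * MvPolynomial.aeval (fun t => ∑ k, C (Q t k) * X k) (F l)
  have hGhom : ∀ i, (G i).IsHomogeneous 2 := by
    intro i
    apply MvPolynomial.IsHomogeneous.sum
    intro l _
    apply MvPolynomial.IsHomogeneous.C_mul
    have := (hhom l).aeval (fun t => ∑ k, C (Q t k) * X (R := K) k) (n := 1) (fun t => by
      apply MvPolynomial.IsHomogeneous.sum
      intro k _
      exact MvPolynomial.isHomogeneous_C_mul_X _ _)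
    simpa using this
  have hGev : ∀ v : Fin 3 → K, (fun i => MvPolynomial.eval v (G i)) = R *ᵥ f (Q *ᵥ v) := by
    intro v
    ext i
    simp only [G, map_sum, map_mul, eval_C, Matrix.mulVec, dotProduct, hfdef]
    refine Finset.sum_congr rfl fun l _ => ?_
    congr 1
    change MvPolynomial.eval₂Hom (RingHom.id K) v (MvPolynomial.bind₁ _ (F l)) = _
    rw [MvPolynomial.eval₂Hom_bind₁]
    have hfun : (fun t => MvPolynomial.eval₂Hom (RingHom.id K) v (∑ k, C (Q t k) * X k))
        = fun t => ∑ k, Q t k * v k := by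
      ext t
      simp
    rw [hfun]
    rfl
  have hGeq : ∀ (M : GL (Fin 3) K) (μ : Fin 3 → K), M ∈ S → M.val * Q = Q * Matrix.diagonal μ →
      ∀ i (v : Fin 3 → K), MvPolynomial.eval (fun k => μ k * v k) (G i)
        = μ i * MvPolynomial.eval v (G i) := by
    intro M μ hM h i v
    have e1 : (fun k => μ k * v k) = Matrix.diagonal μ *ᵥ v := by
      ext k; simp [Matrix.mulVec_diagonal]
    have e2 := hGev (Matrix.diagonal μ *ᵥ v)
    have e3 : R * M.val = Matrix.diagonal μ * R := by
      calc R * M.val = R * (M.val * Q) * R := by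
            rw [Matrix.mul_assoc, Matrix.mul_assoc, hQR, Matrix.mul_one]
        _ = _ := by rw [h, ← Matrix.mul_assoc, hRQ, Matrix.one_mul]
    rw [Matrix.mulVec_mulVec, ← h, ← Matrix.mulVec_mulVec, hM, Matrix.mulVec_mulVec, e3,
      ← Matrix.mulVec_mulVec, ← hGev] at e2
    have := congrFun e2 i
    rw [e1, this, Matrix.mulVec_diagonal]
  have hFev : ∀ v : Fin 3 → K, f v = Q *ᵥ (fun i => MvPolynomial.eval (R *ᵥ v) (G i)) := by
    intro v
    rw [hGev, Matrix.mulVec_mulVec, Matrix.mulVec_mulVec, hQR, Matrix.one_mulVec, Matrix.one_mulVec]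
  rcases diag_case p hp hp3 ζ hζ G hGhom a b hind
    (by
      have := hGeq A α hAS hAQ
      simpa only [ha] using this)
    (by
      have := hGeq B β hBS hBQ
      simpa only [hb] using this) with ⟨i, hi⟩ | ⟨k, c, hk⟩
  · left
    intro halg
    have hlin := halg.linearIndependent
    rw [Fintype.linearIndependent_iff] at hlin
    have hz : ∑ l, R i l • F l = 0 := by
      apply MvPolynomial.funext
      intro v
      have h1 := congrFun (hGev (R *ᵥ v)) i
      rw [Matrix.mulVec_mulVec, hQR, Matrix.one_mulVec] at h1
      simp only [hi, map_zero] at h1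
      rw [map_zero, h1]
      simp [Matrix.mulVec, dotProduct, hfdef, MvPolynomial.smul_eval]
    have hR0 := hlin _ hz
    have h1 := congrFun (congrFun hRQ i) i
    rw [Matrix.mul_apply] at h1
    simp [hR0] at h1
  · right
    have key : ∀ l, F l = (∑ t, C (R k t) * X t) *
        (∑ j, C (Q l j * c j) * ∑ t, C (R j t) * X t) := by
      intro l
      apply MvPolynomial.funext
      intro v
      have h1 := congrFun (hFev v) l
      have h2 : f v l = MvPolynomial.eval v (F l) := rfl
      rw [← h2, h1]
      simp only [hk, map_mul, map_sum, eval_C, eval_X, Matrix.mulVec, dotProduct]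
      rw [Finset.mul_sum]
      refine Finset.sum_congr rfl fun j _ => ?_
      ring
    have hL : ∀ j, (∑ t, C (R j t) * X t : MvPolynomial (Fin 3) K).IsHomogeneous 1 := by
      intro j
      apply MvPolynomial.IsHomogeneous.sum
      intro t _
      exact MvPolynomial.isHomogeneous_C_mul_X _ _
    have hLL : ∀ l, (∑ j, C (Q l j * c j) * ∑ t, C (R j t) * X t :
        MvPolynomial (Fin 3) K).IsHomogeneous 1 := by
      intro l
      apply MvPolynomial.IsHomogeneous.sum
      intro j _
      exact (hL j).C_mul _
    exact ⟨_, _, _, _, hL k, hLL 0, hLL 1, hLL 2, key 0, key 1, key 2⟩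
end
end

section
/- Let K be an algebraically closed field of characteristic 0, let d, e ∈ K with d ≠ 0 and e ≠ 0, and let F : K³ → K³ be the polynomial map F(X,Y,Z) = (X² + Y² − Z², dXY, eXZ). Then for every n ≥ 1 the three components of the n-fold composite F∘F∘⋯∘F (n times), which are homogeneous polynomials of degree 2ⁿ in K[X,Y,Z], have no nonconstant common divisor; consequently the induced rational self-map f of P² satisfies deg(fⁿ) = 2ⁿ for all n ≥ 1. -/
open Matrix MvPolynomial
open scoped Classical

noncomputable section

theorem aux_lin {K : Type*} [Field K] (A L : MvPolynomial (Fin 3) K)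
    (hA : eval ![1, 0, 0] A = 1) (hL : L.totalDegree ≤ 1) (hL0 : L ≠ 0)
    (hLe : eval ![1, 0, 0] L = 0) : IsRelPrime A L := by
  intro q hqA hqL
  obtain ⟨a, rfl⟩ := hqA
  obtain ⟨r, rfl⟩ := hqL
  have hq : q ≠ 0 := left_ne_zero_of_mul hL0
  have hr : r ≠ 0 := right_ne_zero_of_mul hL0
  rw [totalDegree_mul_of_isDomain hq hr] at hL
  rw [map_mul] at hA hLe
  have hre : eval ![1, 0, 0] r = 0 := by
    rcases mul_eq_zero.1 hLe with h | h
    · rw [h, zero_mul] at hA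
      exact absurd hA zero_ne_one
    · exact h
  have hrd : r.totalDegree ≠ 0 := by
    intro h
    rw [totalDegree_eq_zero_iff_eq_C] at h
    rw [h] at hre hr
    simp only [eval_C] at hre
    rw [hre] at hr
    simp at hr
  have hqd : q.totalDegree = 0 := by omega
  rw [totalDegree_eq_zero_iff_eq_C] at hqd
  rw [hqd] at hq ⊢
  apply IsUnit.map
  rw [isUnit_iff_ne_zero]
  intro h
  rw [h] at hq
  simp at hq

theorem aux_lin2 {K : Type*} [Field K] (A : MvPolynomial (Fin 3) K)
    (hA : eval ![1, 0, 0] A = 1) (a b : K) (h : a ≠ 0 ∨ b ≠ 0) :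
    IsRelPrime A (C a * X 1 + C b * X 2) := by
  have hom : (C a * X 1 + C b * X 2 : MvPolynomial (Fin 3) K).IsHomogeneous 1 := by
    apply IsHomogeneous.add
    · simpa using (isHomogeneous_C (Fin 3) a).mul (isHomogeneous_X K (1 : Fin 3))
    · simpa using (isHomogeneous_C (Fin 3) b).mul (isHomogeneous_X K (2 : Fin 3))
  refine aux_lin A _ hA hom.totalDegree_le ?_ (by simp)
  intro h0
  have h1 := congrArg (eval ![0, 1, 0]) h0
  have h2 := congrArg (eval ![0, 0, 1]) h0
  simp at h1 h2
  tauto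

theorem aux_main {K : Type*} [Field K] (d e : K) (hd : d ≠ 0) (he : e ≠ 0)
    (G : ℕ → Fin 3 → MvPolynomial (Fin 3) K) (h00 : G 0 = X)
    (h0 : ∀ n, G (n + 1) 0 = G n 0 ^ 2 + G n 1 ^ 2 - G n 2 ^ 2)
    (h1 : ∀ n, G (n + 1) 1 = C d * (G n 0 * G n 1))
    (h2 : ∀ n, G (n + 1) 2 = C e * (G n 0 * G n 2)) (n : ℕ) :
    ∃ S, G n 1 = C (d ^ n) * X 1 * S ∧ G n 2 = C (e ^ n) * X 2 * S ∧
      eval ![1, 0, 0] (G n 0) = 1 ∧ IsRelPrime (G n 0) S := by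
  induction n with
  | zero => exact ⟨1, by simp [h00], by simp [h00], by simp [h00], isRelPrime_one_right⟩
  | succ n ih =>
    obtain ⟨S, hB, hC, hA, hS⟩ := ih
    refine ⟨G n 0 * S, ?_, ?_, ?_, ?_⟩
    · rw [h1, hB, pow_succ, C_mul]; ring
    · rw [h2, hC, pow_succ, C_mul]; ring
    · rw [h0, hB, hC]; simp [hA]
    · have key : G (n + 1) 0 = G n 0 * G n 0 + (C (d ^ n) * X 1 + C (e ^ n) * X 2) *
          (C (d ^ n) * X 1 + C (-e ^ n) * X 2) * (S * S) := by
        rw [h0, hB, hC, C_neg]; ring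
      have l1 := aux_lin2 _ hA (d ^ n) (e ^ n) (Or.inl (pow_ne_zero _ hd))
      have l2 := aux_lin2 _ hA (d ^ n) (-e ^ n) (Or.inl (pow_ne_zero _ hd))
      have r := (l1.mul_right l2).mul_right (hS.mul_right hS)
      apply IsRelPrime.mul_right
      · intro q hq hqA
        rw [key] at hq
        exact r hqA ((dvd_add_right (hqA.mul_right _)).1 hq)
      · intro q hq hqS
        rw [key] at hq
        exact (hS.mul_left hS) ((dvd_add_left ((hqS.mul_right _).mul_left _)).1 hq) hqS

theorem stmt11 {K : Type*} [Field K] [IsAlgClosed K] [CharZero K]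
    (d e : K) (hd : d ≠ 0) (he : e ≠ 0) :
    let P : Fin 3 → MvPolynomial (Fin 3) K :=
      ![X 0 ^ 2 + X 1 ^ 2 - X 2 ^ 2, C d * (X 0 * X 1), C e * (X 0 * X 2)]
    ∀ n : ℕ, 1 ≤ n →
      (∀ q : MvPolynomial (Fin 3) K, (∀ i, q ∣ iterComp P n i) → IsUnit q) ∧
      ∀ i, (iterComp P n i).IsHomogeneous (2 ^ n) := by
  intro P n _
  have h0 : ∀ n, iterComp P (n + 1) 0 =
      iterComp P n 0 ^ 2 + iterComp P n 1 ^ 2 - iterComp P n 2 ^ 2 := by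
    intro n; simp [iterComp, P]
  have h1 : ∀ n, iterComp P (n + 1) 1 = C d * (iterComp P n 0 * iterComp P n 1) := by
    intro n; simp [iterComp, P, algebraMap_eq]
  have h2 : ∀ n, iterComp P (n + 1) 2 = C e * (iterComp P n 0 * iterComp P n 2) := by
    intro n; simp [iterComp, P, algebraMap_eq]
  constructor
  · intro q hq
    obtain ⟨S, hB, hC, hA, hS⟩ := aux_main d e hd he (iterComp P) rfl h0 h1 h2 n
    have l := aux_lin2 _ hA (d ^ n) 0 (Or.inl (pow_ne_zero _ hd))
    rw [C_0, zero_mul, add_zero] at l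
    exact (l.mul_right hS) (hq 0) (hB ▸ hq 1)
  · clear * - h0 h1 h2
    induction n with
    | zero => intro i; exact isHomogeneous_X K i
    | succ n ih =>
      have e1 : ∀ i, (iterComp P n i ^ 2).IsHomogeneous (2 ^ (n + 1)) := fun i => (ih i).pow 2
      have e2 : ∀ (c : K) i, (C c * (iterComp P n 0 * iterComp P n i)).IsHomogeneous
          (2 ^ (n + 1)) := by
        intro c i
        have := (isHomogeneous_C (Fin 3) c).mul ((ih 0).mul (ih i))
        rwa [show 0 + (2 ^ n + 2 ^ n) = 2 ^ (n + 1) by ring] at this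
      intro i
      fin_cases i
      · exact (h0 n) ▸ ((e1 0).add (e1 1)).sub (e1 2)
      · exact (h1 n) ▸ e2 d 1
      · exact (h2 n) ▸ e2 e 2
end
end

section
/- Let K be an algebraically closed field of characteristic 0, let c ∈ K, let F : K³ → K³ be the polynomial map F(X,Y,Z) = (YZ, X² + cZ², XY), and set R = X² + cZ² and S = cX² + Z² in K[X,Y,Z]. Then: (i) for every k ≥ 0 there exist nonzero homogeneous polynomials h, h' ∈ K[X,Y,Z] with F^{2k}(X,Y,Z) = (h·RᵏX, h·SᵏY, h·RᵏZ) and F^{2k+1}(X,Y,Z) = (h'·SᵏYZ, h'·R^{k+1}, h'·SᵏXY); (ii) if c ∉ {1, −1}, then for all k the triples (RᵏX, SᵏY, RᵏZ) and (SᵏYZ, R^{k+1}, SᵏXY) have no nonconstant common divisor, so the induced rational self-map f of P² satisfies deg(fⁿ) = n + 1 for all n, while if c ∈ {1, −1} then f^{2k} is the map [X, cᵏY, Z]; (iii) letting G : K³ → K³ be the degree-3 polynomial map G(X,Y,Z) = (X³ + cXZ², cX²Y + YZ², X²Z + cZ³) (the reduced second iterate of F), the class [diag(1, t, 1)] lies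 in Aut(G) for every t ∈ K with t ≠ 0, so Aut(G) contains a subgroup isomorphic to Kˣ. -/
open Matrix MvPolynomial
open scoped Classical

noncomputable section

section Helpers16

variable {K : Type*} [Field K]

theorem aux_X_ne (p : MvPolynomial (Fin 3) K) (hp : Prime p) (i j : Fin 3) (hij : i ≠ j)
    (h1 : p ∣ X i) (h2 : p ∣ X j) : False := by
  have hi : Irreducible (X i : MvPolynomial (Fin 3) K) := (MvPolynomial.X_prime (i := i)).irreducible
  have h3 : (X i : MvPolynomial (Fin 3) K) ∣ X j :=
    (((hp.irreducible).associated_of_dvd hi h1).symm.dvd).trans h2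
  rw [MvPolynomial.X_dvd_X] at h3
  exact hij (by simpa using h3)

theorem aux_R_ne (c : K) : (X 0 ^ 2 + C c * X 2 ^ 2 : MvPolynomial (Fin 3) K) ≠ 0 := by
  intro h
  simpa using congrArg (MvPolynomial.eval ![1, 0, 0]) h

theorem aux_S_ne (c : K) : (C c * X 0 ^ 2 + X 2 ^ 2 : MvPolynomial (Fin 3) K) ≠ 0 := by
  intro h
  simpa using congrArg (MvPolynomial.eval ![0, 0, 1]) h

theorem aux_Y_R (c : K) (p : MvPolynomial (Fin 3) K) (hp : Prime p)
    (h1 : p ∣ X 1) (h2 : p ∣ X 0 ^ 2 + C c * X 2 ^ 2) : False := by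
  have hi : Irreducible (X 1 : MvPolynomial (Fin 3) K) := (MvPolynomial.X_prime (i := 1)).irreducible
  obtain ⟨r, hr⟩ := (((hp.irreducible).associated_of_dvd hi h1).symm.dvd).trans h2
  simpa using congrArg (MvPolynomial.eval ![1, 0, 0]) hr

theorem aux_R_S (c : K) (hc : c ≠ 1) (hc' : c ≠ -1) (p : MvPolynomial (Fin 3) K) (hp : Prime p)
    (h1 : p ∣ X 0 ^ 2 + C c * X 2 ^ 2) (h2 : p ∣ C c * X 0 ^ 2 + X 2 ^ 2) : False := by
  have hd : (1 - c ^ 2) ≠ 0 := by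
    intro h
    have : (c - 1) * (c + 1) = 0 := by linear_combination -h
    rcases mul_eq_zero.1 this with h | h
    · exact hc (sub_eq_zero.1 h)
    · exact hc' (eq_neg_of_add_eq_zero_left h)
  have hu : IsUnit (C (1 - c ^ 2) : MvPolynomial (Fin 3) K) := (isUnit_iff_ne_zero.2 hd).map C
  have e1 : p ∣ C (1 - c ^ 2) * X 0 ^ 2 := by
    have := dvd_sub h1 (h2.mul_left (C c))
    convert this using 1
    simp only [map_sub, map_one, map_pow]
    ring
  have e2 : p ∣ C (1 - c ^ 2) * X 2 ^ 2 := by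
    have := dvd_sub h2 (h1.mul_left (C c))
    convert this using 1
    simp only [map_sub, map_one, map_pow]
    ring
  rw [hu.dvd_mul_left] at e1 e2
  exact aux_X_ne p hp 0 2 (by decide) (hp.dvd_of_dvd_pow e1) (hp.dvd_of_dvd_pow e2)

theorem aux_unit (q : MvPolynomial (Fin 3) K) (w : MvPolynomial (Fin 3) K) (hw : w ≠ 0)
    (hq : q ∣ w) (h : ∀ p : MvPolynomial (Fin 3) K, Prime p → p ∣ q → False) : IsUnit q := by
  by_contra hu
  obtain ⟨p, hp, hpq⟩ := WfDvdMonoid.exists_irreducible_factor hu (ne_zero_of_dvd_ne_zero hw hq)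
  exact h p hp.prime hpq

theorem aux_even (c : K) (hc : c ≠ 1) (hc' : c ≠ -1) (k : ℕ) (q : MvPolynomial (Fin 3) K)
    (h0 : q ∣ (X 0 ^ 2 + C c * X 2 ^ 2) ^ k * X 0)
    (h1 : q ∣ (C c * X 0 ^ 2 + X 2 ^ 2) ^ k * X 1)
    (h2 : q ∣ (X 0 ^ 2 + C c * X 2 ^ 2) ^ k * X 2) : IsUnit q := by
  refine aux_unit q _ (mul_ne_zero (pow_ne_zero k (aux_R_ne c)) (X_ne_zero 0)) h0 ?_
  intro p hp hpq
  have hR : p ∣ X 0 ^ 2 + C c * X 2 ^ 2 := by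
    rcases hp.dvd_or_dvd (hpq.trans h0) with h | h
    · exact hp.dvd_of_dvd_pow h
    rcases hp.dvd_or_dvd (hpq.trans h2) with h' | h'
    · exact hp.dvd_of_dvd_pow h'
    exact (aux_X_ne p hp 0 2 (by decide) h h').elim
  rcases hp.dvd_or_dvd (hpq.trans h1) with h | h
  · exact aux_R_S c hc hc' p hp hR (hp.dvd_of_dvd_pow h)
  · exact aux_Y_R c p hp h hR

theorem aux_odd (c : K) (hc : c ≠ 1) (hc' : c ≠ -1) (k : ℕ) (q : MvPolynomial (Fin 3) K)
    (h0 : q ∣ (C c * X 0 ^ 2 + X 2 ^ 2) ^ k * (X 1 * X 2))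
    (h1 : q ∣ (X 0 ^ 2 + C c * X 2 ^ 2) ^ (k + 1))
    (h2 : q ∣ (C c * X 0 ^ 2 + X 2 ^ 2) ^ k * (X 0 * X 1)) : IsUnit q := by
  refine aux_unit q _ (pow_ne_zero (k + 1) (aux_R_ne c)) h1 ?_
  intro p hp hpq
  have hR : p ∣ X 0 ^ 2 + C c * X 2 ^ 2 := hp.dvd_of_dvd_pow (hpq.trans h1)
  rcases hp.dvd_or_dvd (hpq.trans h0) with h | h
  · exact aux_R_S c hc hc' p hp hR (hp.dvd_of_dvd_pow h)
  rcases hp.dvd_or_dvd (hpq.trans h2) with h' | h'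
  · exact aux_R_S c hc hc' p hp hR (hp.dvd_of_dvd_pow h')
  rcases hp.dvd_or_dvd h with h | h
  · exact aux_Y_R c p hp h hR
  rcases hp.dvd_or_dvd h' with h' | h'
  · exact aux_X_ne p hp 0 2 (by decide) h' h
  · exact aux_Y_R c p hp h' hR

theorem aux_R_hom (c : K) :
    (X 0 ^ 2 + C c * X 2 ^ 2 : MvPolynomial (Fin 3) K).IsHomogeneous 2 :=
  (isHomogeneous_X_pow 0 2).add (by simpa using (isHomogeneous_C (Fin 3) c).mul (isHomogeneous_X_pow (R := K) (2 : Fin 3) 2))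

theorem aux_S_hom (c : K) :
    (C c * X 0 ^ 2 + X 2 ^ 2 : MvPolynomial (Fin 3) K).IsHomogeneous 2 :=
  IsHomogeneous.add (by simpa using (isHomogeneous_C (Fin 3) c).mul (isHomogeneous_X_pow (R := K) (0 : Fin 3) 2)) (isHomogeneous_X_pow 2 2)

theorem aux_odd_step (c : K) (k n : ℕ) (h : MvPolynomial (Fin 3) K) (hh : h ≠ 0)
    (hd : ∃ dd, h.IsHomogeneous dd)
    (P : Fin 3 → MvPolynomial (Fin 3) K)
    (hP : P = ![X 1 * X 2, X 0 ^ 2 + C c * X 2 ^ 2, X 0 * X 1])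
    (e0 : iterComp P n 0 = h * ((X 0 ^ 2 + C c * X 2 ^ 2) ^ k * X 0))
    (e1 : iterComp P n 1 = h * ((C c * X 0 ^ 2 + X 2 ^ 2) ^ k * X 1))
    (e2 : iterComp P n 2 = h * ((X 0 ^ 2 + C c * X 2 ^ 2) ^ k * X 2)) :
    ∃ h' : MvPolynomial (Fin 3) K, h' ≠ 0 ∧ (∃ dd, h'.IsHomogeneous dd) ∧
      iterComp P (n + 1) 0 = h' * ((C c * X 0 ^ 2 + X 2 ^ 2) ^ k * (X 1 * X 2)) ∧
      iterComp P (n + 1) 1 = h' * (X 0 ^ 2 + C c * X 2 ^ 2) ^ (k + 1) ∧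
      iterComp P (n + 1) 2 = h' * ((C c * X 0 ^ 2 + X 2 ^ 2) ^ k * (X 0 * X 1)) := by
  obtain ⟨d, hd⟩ := hd
  refine ⟨h ^ 2 * (X 0 ^ 2 + C c * X 2 ^ 2) ^ k,
    mul_ne_zero (pow_ne_zero _ hh) (pow_ne_zero _ (aux_R_ne c)),
    ⟨_, (hd.pow 2).mul ((aux_R_hom c).pow k)⟩, ?_, ?_, ?_⟩
  · have : P 0 = X 1 * X 2 := by rw [hP]; rfl
    simp only [iterComp, this]
    simp only [map_mul, aeval_X, e1, e2]
    ring
  · have : P 1 = X 0 ^ 2 + C c * X 2 ^ 2 := by rw [hP]; rfl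
    simp only [iterComp, this]
    simp only [map_mul, map_add, map_pow, aeval_X, algHom_C, algebraMap_eq, e0, e2]
    ring
  · have : P 2 = X 0 * X 1 := by rw [hP]; rfl
    simp only [iterComp, this]
    simp only [map_mul, aeval_X, e0, e1]
    ring

theorem aux_even_step (c : K) (k n : ℕ) (h : MvPolynomial (Fin 3) K) (hh : h ≠ 0)
    (hd : ∃ dd, h.IsHomogeneous dd)
    (P : Fin 3 → MvPolynomial (Fin 3) K)
    (hP : P = ![X 1 * X 2, X 0 ^ 2 + C c * X 2 ^ 2, X 0 * X 1])
    (e0 : iterComp P n 0 = h * ((C c * X 0 ^ 2 + X 2 ^ 2) ^ k * (X 1 * X 2)))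
    (e1 : iterComp P n 1 = h * (X 0 ^ 2 + C c * X 2 ^ 2) ^ (k + 1))
    (e2 : iterComp P n 2 = h * ((C c * X 0 ^ 2 + X 2 ^ 2) ^ k * (X 0 * X 1))) :
    ∃ h' : MvPolynomial (Fin 3) K, h' ≠ 0 ∧ (∃ dd, h'.IsHomogeneous dd) ∧
      iterComp P (n + 1) 0 = h' * ((X 0 ^ 2 + C c * X 2 ^ 2) ^ (k + 1) * X 0) ∧
      iterComp P (n + 1) 1 = h' * ((C c * X 0 ^ 2 + X 2 ^ 2) ^ (k + 1) * X 1) ∧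
      iterComp P (n + 1) 2 = h' * ((X 0 ^ 2 + C c * X 2 ^ 2) ^ (k + 1) * X 2) := by
  obtain ⟨d, hd⟩ := hd
  refine ⟨h ^ 2 * (C c * X 0 ^ 2 + X 2 ^ 2) ^ k * X 1,
    mul_ne_zero (mul_ne_zero (pow_ne_zero _ hh) (pow_ne_zero _ (aux_S_ne c))) (X_ne_zero 1),
    ⟨_, ((hd.pow 2).mul ((aux_S_hom c).pow k)).mul (isHomogeneous_X K 1)⟩, ?_, ?_, ?_⟩
  · have : P 0 = X 1 * X 2 := by rw [hP]; rfl
    simp only [iterComp, this]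
    simp only [map_mul, aeval_X, e1, e2]
    ring
  · have : P 1 = X 0 ^ 2 + C c * X 2 ^ 2 := by rw [hP]; rfl
    simp only [iterComp, this]
    simp only [map_mul, map_add, map_pow, aeval_X, algHom_C, algebraMap_eq, e0, e2]
    ring
  · have : P 2 = X 0 * X 1 := by rw [hP]; rfl
    simp only [iterComp, this]
    simp only [map_mul, aeval_X, e0, e1]
    ring

theorem aux_iter (c : K) (P : Fin 3 → MvPolynomial (Fin 3) K)
    (hP : P = ![X 1 * X 2, X 0 ^ 2 + C c * X 2 ^ 2, X 0 * X 1]) (k : ℕ) :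
    ∃ h : MvPolynomial (Fin 3) K, h ≠ 0 ∧ (∃ dd, h.IsHomogeneous dd) ∧
      iterComp P (2 * k) 0 = h * ((X 0 ^ 2 + C c * X 2 ^ 2) ^ k * X 0) ∧
      iterComp P (2 * k) 1 = h * ((C c * X 0 ^ 2 + X 2 ^ 2) ^ k * X 1) ∧
      iterComp P (2 * k) 2 = h * ((X 0 ^ 2 + C c * X 2 ^ 2) ^ k * X 2) := by
  induction k with
  | zero => exact ⟨1, one_ne_zero, ⟨0, isHomogeneous_one _ _⟩, by simp [iterComp]⟩
  | succ k ih =>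
    obtain ⟨h, hh, hd, e0, e1, e2⟩ := ih
    obtain ⟨h', hh', hd', e0', e1', e2'⟩ := aux_odd_step c k _ h hh hd P hP e0 e1 e2
    exact aux_even_step c k _ h' hh' hd' P hP e0' e1' e2'

theorem aux_det (t : K) (ht : t ≠ 0) : (Matrix.diagonal ![1, t, 1]).det ≠ 0 := by
  simpa [Matrix.det_diagonal, Fin.prod_univ_three] using ht

/-- The one-parameter subgroup `t ↦ diag(1, t, 1)` of `GL₃(K)`. -/
def auxHom : Kˣ →* GL (Fin 3) K where
  toFun t := Matrix.GeneralLinearGroup.mkOfDetNeZero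
    (Matrix.diagonal ![1, (t : K), 1]) (aux_det (t : K) t.ne_zero)
  map_one' := by
    ext i j
    fin_cases i <;> fin_cases j <;> simp [Matrix.GeneralLinearGroup.mkOfDetNeZero]
  map_mul' s t := by
    ext i j
    fin_cases i <;> fin_cases j <;>
      simp [Matrix.GeneralLinearGroup.mkOfDetNeZero]

theorem auxHom_coe (t : Kˣ) :
    (auxHom t : Matrix (Fin 3) (Fin 3) K) = Matrix.diagonal ![1, (t : K), 1] := rfl

theorem auxHom_inj :
    Function.Injective ((QuotientGroup.mk' (Subgroup.center (GL (Fin 3) K))).comp auxHom) := by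
  rw [injective_iff_map_eq_one]
  intro t ht
  have h1 : auxHom t ∈ Subgroup.center (GL (Fin 3) K) := by
    simpa using ht
  rw [Matrix.GeneralLinearGroup.mem_center_iff_val_mem_range_scalar] at h1
  obtain ⟨r, hr⟩ := h1
  rw [auxHom_coe] at hr
  have a := congrFun (congrFun hr 0) 0
  have b := congrFun (congrFun hr 1) 1
  simp at a b
  ext
  rw [← b, a]; rfl

end Helpers16

theorem stmt16 {K : Type*} [Field K] [IsAlgClosed K] [CharZero K] (c : K) :
    let P : Fin 3 → MvPolynomial (Fin 3) K :=
      ![X 1 * X 2, X 0 ^ 2 + C c * X 2 ^ 2, X 0 * X 1]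
    let R : MvPolynomial (Fin 3) K := X 0 ^ 2 + C c * X 2 ^ 2
    let S : MvPolynomial (Fin 3) K := C c * X 0 ^ 2 + X 2 ^ 2
    let G : (Fin 3 → K) → (Fin 3 → K) := fun v =>
      ![v 0 ^ 3 + c * (v 0 * v 2 ^ 2), c * (v 0 ^ 2 * v 1) + v 1 * v 2 ^ 2,
        v 0 ^ 2 * v 2 + c * v 2 ^ 3]
    (∀ k : ℕ,
      (∃ h : MvPolynomial (Fin 3) K, h ≠ 0 ∧ (∃ dd, h.IsHomogeneous dd) ∧
        iterComp P (2 * k) 0 = h * (R ^ k * X 0) ∧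
        iterComp P (2 * k) 1 = h * (S ^ k * X 1) ∧
        iterComp P (2 * k) 2 = h * (R ^ k * X 2)) ∧
      (∃ h' : MvPolynomial (Fin 3) K, h' ≠ 0 ∧ (∃ dd, h'.IsHomogeneous dd) ∧
        iterComp P (2 * k + 1) 0 = h' * (S ^ k * (X 1 * X 2)) ∧
        iterComp P (2 * k + 1) 1 = h' * R ^ (k + 1) ∧
        iterComp P (2 * k + 1) 2 = h' * (S ^ k * (X 0 * X 1)))) ∧
    (c ≠ 1 → c ≠ -1 →
      (∀ k : ℕ,
        (∀ q : MvPolynomial (Fin 3) K,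
          q ∣ R ^ k * X 0 → q ∣ S ^ k * X 1 → q ∣ R ^ k * X 2 → IsUnit q) ∧
        (∀ q : MvPolynomial (Fin 3) K,
          q ∣ S ^ k * (X 1 * X 2) → q ∣ R ^ (k + 1) → q ∣ S ^ k * (X 0 * X 1) →
          IsUnit q)) ∧
      (∀ n : ℕ, ∃ (h : MvPolynomial (Fin 3) K) (W : Fin 3 → MvPolynomial (Fin 3) K),
        (∀ j, iterComp P n j = h * W j) ∧
        (∀ q : MvPolynomial (Fin 3) K, (∀ j, q ∣ W j) → IsUnit q) ∧
        ∀ j, (W j).IsHomogeneous (n + 1))) ∧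
    ((c = 1 ∨ c = -1) →
      ∀ k : ℕ, ∃ h : MvPolynomial (Fin 3) K, h ≠ 0 ∧
        iterComp P (2 * k) 0 = h * X 0 ∧
        iterComp P (2 * k) 1 = C (c ^ k) * (h * X 1) ∧
        iterComp P (2 * k) 2 = h * X 2) ∧
    ((∀ t : K, t ≠ 0 → toPGL3 (Matrix.diagonal ![1, t, 1]) ∈ AutQ G) ∧
      ∃ H : Subgroup (PGL3 K), (H : Set (PGL3 K)) ⊆ AutQ G ∧ Nonempty (H ≃* Kˣ)) := by
  intro P R S G
  have hdiag : ∀ (t : K) (v : Fin 3 → K), G (Matrix.diagonal ![1, t, 1] *ᵥ v) =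
      (1 : K) • (Matrix.diagonal ![1, t, 1] *ᵥ G v) := by
    intro t v
    ext i
    fin_cases i <;> simp [G, Matrix.mulVec_diagonal, Matrix.mulVec, dotProduct, Fin.sum_univ_three] <;> ring
  have hodd : ∀ k : ℕ, ∃ h' : MvPolynomial (Fin 3) K, h' ≠ 0 ∧ (∃ dd, h'.IsHomogeneous dd) ∧
        iterComp P (2 * k + 1) 0 = h' * (S ^ k * (X 1 * X 2)) ∧
        iterComp P (2 * k + 1) 1 = h' * R ^ (k + 1) ∧
        iterComp P (2 * k + 1) 2 = h' * (S ^ k * (X 0 * X 1)) := by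
    intro k
    obtain ⟨h, hh, hd, e0, e1, e2⟩ := aux_iter c P rfl k
    exact aux_odd_step c k _ h hh hd P rfl e0 e1 e2
  refine ⟨fun k => ⟨aux_iter c P rfl k, hodd k⟩, ?_, ?_, ?_, ?_⟩
  · intro hc hc'
    refine ⟨fun k => ⟨aux_even c hc hc' k, aux_odd c hc hc' k⟩, ?_⟩
    intro n
    rcases Nat.even_or_odd' n with ⟨k, rfl | rfl⟩
    · obtain ⟨h, hh, hd, e0, e1, e2⟩ := aux_iter c P rfl k
      refine ⟨h, ![R ^ k * X 0, S ^ k * X 1, R ^ k * X 2], ?_, ?_, ?_⟩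
      · intro j
        fin_cases j
        exacts [e0, e1, e2]
      · intro q hq
        exact aux_even c hc hc' k q (hq 0) (hq 1) (hq 2)
      · intro j
        fin_cases j
        exacts [((aux_R_hom c).pow k).mul (isHomogeneous_X K 0),
          ((aux_S_hom c).pow k).mul (isHomogeneous_X K 1),
          ((aux_R_hom c).pow k).mul (isHomogeneous_X K 2)]
    · obtain ⟨h, hh, hd, e0, e1, e2⟩ := hodd k
      refine ⟨h, ![S ^ k * (X 1 * X 2), R ^ (k + 1), S ^ k * (X 0 * X 1)], ?_, ?_, ?_⟩
      · intro j
        fin_cases j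
        exacts [e0, e1, e2]
      · intro q hq
        exact aux_odd c hc hc' k q (hq 0) (hq 1) (hq 2)
      · intro j
        fin_cases j
        exacts [((aux_S_hom c).pow k).mul ((isHomogeneous_X K 1).mul (isHomogeneous_X K 2)),
          (aux_R_hom c).pow (k + 1),
          ((aux_S_hom c).pow k).mul ((isHomogeneous_X K 0).mul (isHomogeneous_X K 1))]
  · intro hc k
    obtain ⟨h, hh, hd, e0, e1, e2⟩ := aux_iter c P rfl k
    have hcc : c * c = 1 := by rcases hc with rfl | rfl <;> norm_num
    have hCC : (C c * C c : MvPolynomial (Fin 3) K) = 1 := by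
      rw [← C_mul, hcc, C_1]
    have hS : (C c * X 0 ^ 2 + X 2 ^ 2 : MvPolynomial (Fin 3) K)
        = C c * (X 0 ^ 2 + C c * X 2 ^ 2) := by
      linear_combination (-X 2 ^ 2) * hCC
    refine ⟨h * R ^ k, mul_ne_zero hh (pow_ne_zero k (aux_R_ne c)), ?_, ?_, ?_⟩
    · rw [e0]; ring
    · rw [e1, hS, mul_pow, C_pow]; ring
    · rw [e2]; ring
  · intro t ht
    refine ⟨Matrix.GeneralLinearGroup.mkOfDetNeZero _ (aux_det t ht), ?_, 1, one_ne_zero, hdiag t⟩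
    rw [toPGL3, dif_pos (aux_det t ht)]
  · refine ⟨((QuotientGroup.mk' (Subgroup.center (GL (Fin 3) K))).comp auxHom).range, ?_,
      ⟨(MonoidHom.ofInjective auxHom_inj).symm⟩⟩
    rintro _ ⟨t, rfl⟩
    exact ⟨auxHom t, rfl, 1, one_ne_zero, hdiag t⟩
end
end

section
/- Let K be an algebraically closed field of characteristic 0 and let F = (F₀, F₁, F₂) be a triple of homogeneous polynomials of degree 2 in K[X,Y,Z] such that F₀, F₁, F₂ have no nonconstant common divisor and are algebraically independent over K (so F defines a dominant rational self-map of P² of degree 2). If Aut(F) contains a subgroup isomorphic to (ℤ/2ℤ) × (ℤ/2ℤ) or a subgroup isomorphic to ℤ/5ℤ, then F does not define a morphism of P²: there exists v ∈ K³ with v ≠ 0 and F₀(v) = F₁(v) = F₂(v) = 0. -/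
open Matrix MvPolynomial
open scoped Classical

noncomputable section

/-- Evaluation of a homogeneous quadratic polynomial scales quadratically. -/
lemma eval_smul_two {K : Type*} [Field K] (p : MvPolynomial (Fin 3) K)
    (hp : p.IsHomogeneous 2) (s : K) (v : Fin 3 → K) :
    MvPolynomial.eval (s • v) p = s ^ 2 * MvPolynomial.eval v p := by
  rw [MvPolynomial.eval_eq, MvPolynomial.eval_eq, Finset.mul_sum]
  refine Finset.sum_congr rfl fun d hd => ?_
  have h2 : d.degree = 2 := by
    have := hp (MvPolynomial.mem_support_iff.mp hd)
    rw [Finsupp.degree_eq_weight_one]; exact this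
  have h3 : ∏ i ∈ d.support, s ^ d i = s ^ 2 := by
    rw [Finset.prod_pow_eq_pow_sum, ← h2]; rfl
  simp only [Pi.smul_apply, smul_eq_mul, mul_pow, Finset.prod_mul_distrib]
  rw [h3]; ring

/-- A quadratic form has a nontrivial zero on any plane. -/
lemma exists_zero_on_plane {K : Type*} [Field K] [IsAlgClosed K] [CharZero K]
    (p : MvPolynomial (Fin 3) K) (hp : p.IsHomogeneous 2) (v w : Fin 3 → K) :
    ∃ a b : K, (a ≠ 0 ∨ b ≠ 0) ∧ MvPolynomial.eval (a • v + b • w) p = 0 := by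
  by_contra hcon
  push Not at hcon
  have key : ∀ v w : Fin 3 → K,
      (∀ t : K, MvPolynomial.eval (v + t • w) p ≠ 0) →
      ∃ k : K, ∀ t : K, MvPolynomial.eval (v + t • w) p = k := by
    intro v w h
    let q : Polynomial K :=
      MvPolynomial.aeval (fun i => Polynomial.C (v i) + Polynomial.X * Polynomial.C (w i)) p
    have hq : ∀ t : K, q.eval t = MvPolynomial.eval (v + t • w) p := by
      intro t
      have h1 : q.eval t = ((Polynomial.aeval t).comp (MvPolynomial.aeval
        (fun i => Polynomial.C (v i) + Polynomial.X * Polynomial.C (w i)))) p := by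
        simp [q, Polynomial.coe_aeval_eq_eval]
      rw [h1, MvPolynomial.comp_aeval, ← MvPolynomial.aeval_eq_eval]
      congr 2
      funext i
      simp only [map_add, map_mul, Polynomial.aeval_C, Polynomial.aeval_X, Algebra.algebraMap_self,
        RingHom.id_apply, Pi.add_apply, Pi.smul_apply, smul_eq_mul]
    have hdeg : q.degree = 0 := by
      by_contra hd
      obtain ⟨t, ht⟩ := IsAlgClosed.exists_root q hd
      exact h t (by rw [← hq t]; exact ht)
    rw [Polynomial.eq_C_of_degree_eq_zero hdeg] at hq
    exact ⟨q.coeff 0, fun t => by rw [← hq t, Polynomial.eval_C]⟩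
  obtain ⟨k, hk⟩ := key v w (fun t => by
    have := hcon 1 t (Or.inl one_ne_zero); rwa [one_smul] at this)
  obtain ⟨k', hk'⟩ := key w v (fun t => by
    have := hcon t 1 (Or.inr one_ne_zero); rwa [one_smul, add_comm] at this)
  have e1 : k = k' := by
    rw [← hk 1, ← hk' 1, one_smul, one_smul, add_comm]
  have e2 : k = 2 ^ 2 * k' := by
    rw [← hk 2, ← hk' (2⁻¹), ← eval_smul_two p hp]
    congr 2
    rw [smul_add, smul_smul, mul_inv_cancel₀ two_ne_zero, one_smul, add_comm]
  have hk0 : k = 0 := by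
    have : (3 : K) * k = 0 := by linear_combination 4 * e1 - e2
    simpa using this
  refine hcon 1 0 (Or.inl one_ne_zero) ?_
  rw [one_smul, hk 0, hk0]

/-- Cayley-Hamilton for an involution of determinant one. -/
lemma trace_of_invol {K : Type*} [Field K] [CharZero K]
    (A : Matrix (Fin 3) (Fin 3) K) (hA : A * A = 1) (hdet : A.det = 1) (h1 : A ≠ 1) :
    A.trace = -1 := by
  have hadj : A.adjugate = A := by
    have h : A * A.adjugate = 1 := by rw [Matrix.mul_adjugate, hdet, one_smul]
    calc A.adjugate = (A * A) * A.adjugate := by rw [hA, one_mul]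
      _ = A := by rw [mul_assoc, h, mul_one]
  have hCH : A.adjugate = A * A - A.trace • A + A.adjugate.trace • (1 : Matrix _ _ K) := by
    rw [Matrix.adjugate_fin_three]
    ext i j
    fin_cases i <;> fin_cases j <;>
      simp [Matrix.mul_apply, Fin.sum_univ_three, Matrix.trace, Matrix.diag] <;> ring
  rw [hadj, hA] at hCH
  have h2 : (1 + A.trace) • A = (1 + A.trace) • (1 : Matrix (Fin 3) (Fin 3) K) := by
    rw [add_smul, add_smul, one_smul, one_smul]
    nth_rewrite 1 [hCH]
    abel
  by_contra hne
  have h3 : (1 + A.trace) ≠ 0 := fun h => hne (by linear_combination h)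
  exact h1 (smul_right_injective _ h3 h2)

/-- An equivariant involution of determinant one forces a common zero. -/
lemma zero_of_invol {K : Type*} [Field K] [IsAlgClosed K] [CharZero K]
    (F : Fin 3 → MvPolynomial (Fin 3) K)
    (hhom : ∀ i, (F i).IsHomogeneous 2)
    (A : Matrix (Fin 3) (Fin 3) K) (hA : A * A = 1) (hdet : A.det = 1) (h1 : A ≠ 1)
    (hF : ∀ v : Fin 3 → K, (fun j => MvPolynomial.eval (A *ᵥ v) (F j)) =
      A *ᵥ (fun j => MvPolynomial.eval v (F j))) :
    ∃ v : Fin 3 → K, v ≠ 0 ∧ ∀ i, MvPolynomial.eval v (F i) = 0 := by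
  have htr := trace_of_invol A hA hdet h1
  let P : Matrix (Fin 3) (Fin 3) K := (2⁻¹ : K) • (1 + A)
  have hPapp : ∀ v, Matrix.toLin' P v = (2⁻¹ : K) • (v + A *ᵥ v) := by
    intro v
    simp [P, Matrix.toLin'_apply, Matrix.smul_mulVec, Matrix.add_mulVec]
  have hAA : ∀ v, A *ᵥ (A *ᵥ v) = v := by
    intro v; rw [Matrix.mulVec_mulVec, hA, Matrix.one_mulVec]
  have hfix : ∀ u, A *ᵥ u = u → Matrix.toLin' P u = u := by
    intro u hu
    rw [hPapp, hu, ← two_smul K u, smul_smul, inv_mul_cancel₀ two_ne_zero, one_smul]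
  have hproj : LinearMap.IsProj (LinearMap.range (Matrix.toLin' P)) (Matrix.toLin' P) := by
    refine ⟨fun x => LinearMap.mem_range_self _ x, ?_⟩
    rintro _ ⟨x, rfl⟩
    apply hfix
    rw [hPapp, Matrix.mulVec_smul, Matrix.mulVec_add, hAA, add_comm]
  have hrank : Module.finrank K (LinearMap.range (Matrix.toLin' P)) = 1 := by
    have h := hproj.trace
    rw [Matrix.trace_toLin'_eq] at h
    have h' : P.trace = 1 := by
      simp only [P, Matrix.trace_smul, Matrix.trace_add, Matrix.trace_one, htr]
      norm_num
    rw [h'] at h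
    exact_mod_cast h.symm
  have hker : Module.finrank K (LinearMap.ker (Matrix.toLin' P)) = 2 := by
    have := LinearMap.finrank_range_add_finrank_ker (Matrix.toLin' P)
    rw [hrank, Module.finrank_fin_fun] at this
    omega
  -- a basis of the kernel
  let b := Module.finBasisOfFinrankEq K _ hker
  obtain ⟨w, hw0, hw⟩ := finrank_eq_one_iff'.mp hrank
  have hwv : (w : Fin 3 → K) ≠ 0 := fun h => hw0 (Subtype.ext h)
  obtain ⟨i, hi⟩ := Function.ne_iff.mp hwv
  obtain ⟨s, t, hst, hz⟩ := exists_zero_on_plane (F i) (hhom i) (b 0 : Fin 3 → K) (b 1)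
  refine ⟨s • (b 0 : Fin 3 → K) + t • (b 1 : Fin 3 → K), ?_, ?_⟩
  · intro h
    have h' : s • b 0 + t • b 1 = 0 := Subtype.ext h
    have := LinearIndependent.pair_iff.mp
      (by
        convert b.linearIndependent using 1
        funext i
        fin_cases i <;> rfl :
        LinearIndependent K ![b 0, b 1]) s t h'
    rcases hst with h | h
    · exact h this.1
    · exact h this.2
  · set u : Fin 3 → K := s • (b 0 : Fin 3 → K) + t • (b 1 : Fin 3 → K) with hu
    have huk : Matrix.toLin' P u = 0 := by
      have : u ∈ LinearMap.ker (Matrix.toLin' P) :=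
        Submodule.add_mem _ (Submodule.smul_mem _ _ (b 0).2) (Submodule.smul_mem _ _ (b 1).2)
      exact this
    have hAu : A *ᵥ u = (-1 : K) • u := by
      rw [hPapp] at huk
      have h2 : u + A *ᵥ u = 0 :=
        (smul_eq_zero.mp huk).resolve_left (inv_ne_zero two_ne_zero)
      rw [neg_smul, one_smul]
      exact (neg_eq_of_add_eq_zero_right h2).symm
    have hFu : A *ᵥ (fun j => MvPolynomial.eval u (F j)) =
        (fun j => MvPolynomial.eval u (F j)) := by
      rw [← hF, hAu]
      funext j
      rw [eval_smul_two _ (hhom j)]; ring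
    obtain ⟨c, hc⟩ := hw ⟨_, ⟨_, hfix _ hFu⟩⟩
    have hc' : ∀ j, c * (w : Fin 3 → K) j = MvPolynomial.eval u (F j) := fun j =>
      congrFun (congrArg Subtype.val hc) j
    have hc0 : c = 0 := by
      have := hc' i
      rw [hz] at this
      exact (mul_eq_zero.mp this).resolve_right hi
    intro j
    rw [← hc' j, hc0, zero_mul]

/-- An equivariant matrix of order five is impossible for a map without zeros. -/
lemma no_order_five {K : Type*} [Field K] [IsAlgClosed K] [CharZero K]
    (f : (Fin 3 → K) → (Fin 3 → K))
    (hf : ∀ (s : K) v, f (s • v) = s ^ 2 • f v)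
    (hz : ∀ v, v ≠ 0 → f v ≠ 0)
    (A : Matrix (Fin 3) (Fin 3) K) (hA : A ^ 5 = 1) (h1 : A ≠ 1)
    (hF : ∀ v : Fin 3 → K, f (A *ᵥ v) = A *ᵥ f v) : False := by
  let p : Polynomial K := Polynomial.X ^ 4 + Polynomial.X ^ 3 + Polynomial.X ^ 2 + Polynomial.X + 1
  have hp : Polynomial.aeval A p = A ^ 4 + A ^ 3 + A ^ 2 + A + 1 := by simp [p]
  have hmul : (A ^ 4 + A ^ 3 + A ^ 2 + A + 1) * (A - 1) = 0 := by
    have : (A ^ 4 + A ^ 3 + A ^ 2 + A + 1) * (A - 1) = A ^ 5 - 1 := by noncomm_ring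
    rw [this, hA, sub_self]
  have hnu : ¬ IsUnit (Polynomial.aeval A p) := by
    rw [hp]
    intro hu
    exact h1 (sub_eq_zero.mp ((hu.mul_right_eq_zero).mp hmul))
  have h0 : (0 : K) ∈ spectrum K (Polynomial.aeval A p) := by
    rw [spectrum.zero_mem_iff]; exact hnu
  rw [spectrum.map_polynomial_aeval_of_nonempty A p
    (spectrum.nonempty_of_isAlgClosed_of_finiteDimensional K A)] at h0
  obtain ⟨m, hm, hpm⟩ := h0
  have hpm' : m ^ 4 + m ^ 3 + m ^ 2 + m + 1 = 0 := by simpa [p] using hpm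
  have hm5 : m ^ 5 = 1 := by linear_combination (m - 1) * hpm'
  have hm1 : m ≠ 1 := by
    rintro rfl
    norm_num at hpm'
  have hprim : IsPrimitiveRoot m 5 := by
    have : Fact (Nat.Prime 5) := ⟨by norm_num⟩
    rw [← orderOf_eq_prime hm5 hm1]
    exact IsPrimitiveRoot.orderOf m
  rw [← Matrix.spectrum_toLin', ← Module.End.hasEigenvalue_iff_mem_spectrum] at hm
  obtain ⟨v, hv⟩ := hm.exists_hasEigenvector
  have step : ∀ (μ : K) v, Module.End.HasEigenvector (Matrix.toLin' A) μ v →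
      Module.End.HasEigenvector (Matrix.toLin' A) (μ ^ 2) (f v) := by
    intro μ v h
    rw [Module.End.hasEigenvector_iff, Module.End.mem_eigenspace_iff] at h ⊢
    refine ⟨?_, hz v h.2⟩
    rw [Matrix.toLin'_apply, ← hF, ← hf, ← h.1, Matrix.toLin'_apply]
  have e1 := step _ _ hv
  have e2 := step _ _ e1
  have e3 := step _ _ e2
  have e3' : Module.End.HasEigenvector (Matrix.toLin' A) (m ^ 3) (f (f (f v))) := by
    convert e3 using 1
    linear_combination (- m ^ 3) * hm5
  have e2' : Module.End.HasEigenvector (Matrix.toLin' A) (m ^ 4) (f (f v)) := by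
    convert e2 using 1
    ring
  have e0' : Module.End.HasEigenvector (Matrix.toLin' A) (m ^ 1) v := by
    rwa [pow_one]
  let g : Fin 4 → K := fun i => m ^ (i.val + 1)
  have hg : Function.Injective g := by
    intro i j hij
    have := hprim.pow_inj (by omega) (by omega) hij
    exact Fin.ext (by omega)
  have hli := Module.End.eigenvectors_linearIndependent' (Matrix.toLin' A) g hg
    ![v, f v, f (f (f v)), f (f v)] (by
      intro i
      fin_cases i
      · exact e0'
      · exact e1
      · exact e3'
      · exact e2')
  have := hli.fintype_card_le_finrank
  simp at this

theorem stmt17 {K : Type*} [Field K] [IsAlgClosed K] [CharZero K]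
    (F : Fin 3 → MvPolynomial (Fin 3) K)
    (hhom : ∀ i, (F i).IsHomogeneous 2)
    (hcop : ∀ q : MvPolynomial (Fin 3) K, (∀ i, q ∣ F i) → IsUnit q)
    (hind : AlgebraicIndependent K F)
    (H : Subgroup (PGL3 K))
    (hsub : (H : Set (PGL3 K)) ⊆ AutQ (fun v j => MvPolynomial.eval v (F j)))
    (hiso : Nonempty (H ≃* (Multiplicative (ZMod 2) × Multiplicative (ZMod 2))) ∨
            Nonempty (H ≃* Multiplicative (ZMod 5))) :
    ∃ v : Fin 3 → K, v ≠ 0 ∧ ∀ i, MvPolynomial.eval v (F i) = 0 := by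
  by_contra hcon
  set f : (Fin 3 → K) → (Fin 3 → K) := fun v j => MvPolynomial.eval v (F j) with hfdef
  have hf : ∀ (s : K) v, f (s • v) = s ^ 2 • f v := by
    intro s v; funext j
    exact eval_smul_two _ (hhom j) s v
  have hz : ∀ v, v ≠ 0 → f v ≠ 0 := fun v hv h => hcon ⟨v, hv, fun i => congrFun h i⟩
  -- lifts commuting with `f`
  have lift : ∀ h ∈ H, ∃ N : GL (Fin 3) K, (QuotientGroup.mk N : PGL3 K) = h ∧
      ∀ v, f ((N : Matrix (Fin 3) (Fin 3) K) *ᵥ v) = (N : Matrix (Fin 3) (Fin 3) K) *ᵥ f v := by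
    intro h hh
    obtain ⟨M, hM, c, hc, hcomm⟩ := hsub hh
    let S : GL (Fin 3) K := Matrix.GeneralLinearGroup.scalar (Fin 3) (Units.mk0 c hc)⁻¹
    have hSc : S ∈ Subgroup.center (GL (Fin 3) K) := by
      rw [Matrix.GeneralLinearGroup.center_eq_range_scalar]
      exact ⟨_, rfl⟩
    have hval : ((M * S : GL (Fin 3) K) : Matrix (Fin 3) (Fin 3) K) =
        c⁻¹ • (M : Matrix (Fin 3) (Fin 3) K) := by
      ext i j
      simp [S, Matrix.GeneralLinearGroup.scalar, mul_comm]
    refine ⟨M * S, ?_, ?_⟩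
    · rw [← hM]
      exact QuotientGroup.mk_mul_of_mem M hSc
    · intro v
      rw [hval, Matrix.smul_mulVec, Matrix.smul_mulVec, hf, hcomm, smul_smul]
      congr 1
      field_simp
  have triv : ∀ N : GL (Fin 3) K, (QuotientGroup.mk N : PGL3 K) = 1 →
      (∀ v, f ((N : Matrix (Fin 3) (Fin 3) K) *ᵥ v) =
        (N : Matrix (Fin 3) (Fin 3) K) *ᵥ f v) → N = 1 := by
    intro N hN hcomm
    rw [QuotientGroup.eq_one_iff,
      Matrix.GeneralLinearGroup.mem_center_iff_val_mem_range_scalar] at hN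
    obtain ⟨s, hs⟩ := hN
    have hs' : ∀ v, (N : Matrix (Fin 3) (Fin 3) K) *ᵥ v = s • v := by
      intro v
      rw [← hs]; ext i; simp [Matrix.mulVec_diagonal]
    have hs0 : s ≠ 0 := by
      rintro rfl
      exact N.ne_zero (by rw [← hs]; simp)
    have hv := hcomm 1
    rw [hs', hs', hf] at hv
    have h2 : s ^ 2 = s := smul_left_injective K (hz 1 one_ne_zero) hv
    have h3 : s = 1 := by
      have : s * (s - 1) = 0 := by linear_combination h2
      exact sub_eq_zero.mp ((mul_eq_zero.mp this).resolve_left hs0)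
    apply Units.ext
    rw [← hs, h3]; simp
  have cmul : ∀ M N : GL (Fin 3) K,
      (∀ v, f ((M : Matrix (Fin 3) (Fin 3) K) *ᵥ v) =
        (M : Matrix (Fin 3) (Fin 3) K) *ᵥ f v) →
      (∀ v, f ((N : Matrix (Fin 3) (Fin 3) K) *ᵥ v) =
        (N : Matrix (Fin 3) (Fin 3) K) *ᵥ f v) →
      ∀ v, f (((M * N : GL (Fin 3) K) : Matrix (Fin 3) (Fin 3) K) *ᵥ v) =
        ((M * N : GL (Fin 3) K) : Matrix (Fin 3) (Fin 3) K) *ᵥ f v := by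
    intro M N hM hN v
    rw [Units.val_mul, ← Matrix.mulVec_mulVec, ← Matrix.mulVec_mulVec, hM, hN]
  rcases hiso with ⟨⟨e⟩⟩ | ⟨⟨e⟩⟩
  · have inv : ∀ x : Multiplicative (ZMod 2) × Multiplicative (ZMod 2), x * x = 1 := by decide
    have main : ∀ A : GL (Fin 3) K,
        (∀ v, f ((A : Matrix (Fin 3) (Fin 3) K) *ᵥ v) =
          (A : Matrix (Fin 3) (Fin 3) K) *ᵥ f v) →
        ∀ h : H, h ≠ 1 → (QuotientGroup.mk A : PGL3 K) = h →
        (A : Matrix (Fin 3) (Fin 3) K).det = -1 := by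
      intro A hA h h1 hAh
      have hh : h * h = 1 := e.injective (by rw [map_mul, inv, map_one])
      have hAA : A * A = 1 := by
        apply triv _ _ (cmul A A hA hA)
        rw [QuotientGroup.mk_mul, hAh]
        exact congrArg Subtype.val hh
      have hAA' : (A : Matrix (Fin 3) (Fin 3) K) * (A : Matrix (Fin 3) (Fin 3) K) = 1 := by
        rw [← Units.val_mul, hAA, Units.val_one]
      have hd : (A : Matrix (Fin 3) (Fin 3) K).det * (A : Matrix (Fin 3) (Fin 3) K).det = 1 := by
        rw [← Matrix.det_mul, hAA', Matrix.det_one]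
      rcases mul_self_eq_one_iff.mp hd with hd | hd
      · refine absurd (zero_of_invol F hhom _ hAA' hd ?_ hA) hcon
        intro hA1
        have : A = 1 := Units.ext hA1
        apply h1
        apply Subtype.ext
        rw [← hAh, this]; rfl
      · exact hd
    let a : H := e.symm (Multiplicative.ofAdd 1, 1)
    let b : H := e.symm (1, Multiplicative.ofAdd 1)
    have ha : a ≠ 1 := by
      intro h; rw [MulEquiv.map_eq_one_iff] at h; revert h; decide
    have hb : b ≠ 1 := by
      intro h; rw [MulEquiv.map_eq_one_iff] at h; revert h; decide
    have hab : a * b ≠ 1 := by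
      intro h; rw [← map_mul, MulEquiv.map_eq_one_iff] at h; revert h; decide
    obtain ⟨A, hA, hAc⟩ := lift a a.2
    obtain ⟨B, hB, hBc⟩ := lift b b.2
    have dA := main A hAc a ha hA
    have dB := main B hBc b hb hB
    have dAB := main (A * B) (cmul A B hAc hBc) (a * b) hab
      (by rw [QuotientGroup.mk_mul, hA, hB]; rfl)
    rw [Units.val_mul, Matrix.det_mul, dA, dB] at dAB
    norm_num at dAB
  · let a : H := e.symm (Multiplicative.ofAdd 1)
    have ha : a ≠ 1 := by
      intro h; rw [MulEquiv.map_eq_one_iff] at h; revert h; decide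
    have ha5 : a ^ 5 = 1 := by
      rw [← map_pow, MulEquiv.map_eq_one_iff]; decide
    obtain ⟨A, hA, hAc⟩ := lift a a.2
    have hpow : ∀ n : ℕ, ∀ v, f (((A ^ n : GL (Fin 3) K) : Matrix (Fin 3) (Fin 3) K) *ᵥ v) =
        ((A ^ n : GL (Fin 3) K) : Matrix (Fin 3) (Fin 3) K) *ᵥ f v := by
      intro n
      induction n with
      | zero => intro v; simp
      | succ k ih => rw [pow_succ]; exact cmul _ _ ih hAc
    have hA5 : A ^ 5 = 1 := by
      apply triv _ _ (hpow 5)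
      rw [QuotientGroup.mk_pow, hA]
      exact congrArg Subtype.val ha5
    refine no_order_five f hf hz A ?_ ?_ hAc
    · rw [← Units.val_pow_eq_pow_val, hA5, Units.val_one]
    · intro hA1
      have : A = 1 := Units.ext hA1
      apply ha
      apply Subtype.ext
      rw [← hA, this]; rfl
end
end
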